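/- arXiv:1808.08431 — 4 statements merged into one kernel-verified Lean document; each statement's English description precedes it below -/
import Mathlib

section
/- Let p(x) = Σ_{j=0}^r b_{α(j)} x^{α(j)} + b_β x^β be a circuit polynomial in n real variables, i.e. 0 ≤ r ≤ n, all b_{α(j)} > 0, all α(j) ∈ (2ℕ)^n, β ∈ ℕ^n, and there exist unique barycentric coordinates λ_0,…,λ_r > 0 with Σ_{j=0}^r λ_j = 1 and β = Σ_{j=0}^r λ_j α(j). If the coefficient of the inner term satisfies |b_β| ≤ Θ_p, where Θ_p = Π_{j=0}^r (b_{α(j)}/λ_j)^{λ_j} is the circuit number, then p(x) ≥ 0 for all x ∈ ℝ^n. -/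
/-!
Weighted AM-GM applied to the terms `(b j / λ j) * |x| ^ α j` with weights `λ j` bounds the outer
part of the polynomial from below by `Θ * |x| ^ (∑ j, λ j * α j) = Θ * |x ^ β|`, which dominates
the absolute value of the inner term. Evenness of the `α j` lets `x` be replaced by `|x|`.
-/

section GeometricMean

open Finset

variable {ι σ : Type*} {s : Finset ι} {w : ι → ℝ}

theorem prod_pow_rpow_eq_pow_of_eq_sum {y : ℝ} (hy : 0 ≤ y) (hw : ∀ j ∈ s, 0 ≤ w j)
    {a : ι → ℕ} {n : ℕ} (hn : (n : ℝ) = ∑ j ∈ s, w j * a j) :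
    ∏ j ∈ s, (y ^ a j) ^ w j = y ^ n :=
  calc ∏ j ∈ s, (y ^ a j) ^ w j
    _ = ∏ j ∈ s, y ^ (w j * a j) := prod_congr rfl fun j _ ↦ by
      rw [← Real.rpow_natCast_mul hy, mul_comm]
    _ = y ^ ∑ j ∈ s, w j * a j :=
      (Real.rpow_sum_of_nonneg hy fun j hj ↦ mul_nonneg (hw j hj) (Nat.cast_nonneg _)).symm
    _ = y ^ n := by rw [← hn, Real.rpow_natCast]

theorem prod_monomial_rpow_eq_monomial_of_eq_sum {t : Finset σ} {y : σ → ℝ}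
    (hy : ∀ i ∈ t, 0 ≤ y i) (hw : ∀ j ∈ s, 0 ≤ w j) {α : ι → σ → ℕ} {β : σ → ℕ}
    (hβ : ∀ i ∈ t, (β i : ℝ) = ∑ j ∈ s, w j * α j i) :
    ∏ j ∈ s, (∏ i ∈ t, y i ^ α j i) ^ w j = ∏ i ∈ t, y i ^ β i :=
  calc ∏ j ∈ s, (∏ i ∈ t, y i ^ α j i) ^ w j
    _ = ∏ j ∈ s, ∏ i ∈ t, (y i ^ α j i) ^ w j := prod_congr rfl fun _ _ ↦
      (Real.finsetProd_rpow _ _ (fun i hi ↦ pow_nonneg (hy i hi) _) _).symm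
    _ = ∏ i ∈ t, ∏ j ∈ s, (y i ^ α j i) ^ w j := prod_comm
    _ = ∏ i ∈ t, y i ^ β i := prod_congr rfl fun i hi ↦
      prod_pow_rpow_eq_pow_of_eq_sum (hy i hi) hw (hβ i hi)

end GeometricMean

section CircuitNumber

open Finset

variable {ι σ : Type*} [Fintype ι] [Fintype σ] {b lam : ι → ℝ} {α : ι → σ → ℕ} {β : σ → ℕ}

/-- The circuit number `Θ` of a circuit polynomial with outer coefficients `b` whose inner
exponent has barycentric coordinates `lam`: the bound on its inner coefficient. It is meant for
positive `lam`; where `lam j = 0`, the `j`-th factor is `1`. -/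
noncomputable def circuitNumber (b lam : ι → ℝ) : ℝ :=
  ∏ j, (b j / lam j) ^ lam j

theorem circuitNumber_mul_prod_rpow_le_sum (hb : ∀ j, 0 ≤ b j) (hlam : ∀ j, 0 < lam j)
    (hlamsum : ∑ j, lam j = 1) {z : ι → ℝ} (hz : ∀ j, 0 ≤ z j) :
    circuitNumber b lam * ∏ j, z j ^ lam j ≤ ∑ j, b j * z j := by
  have hratio (j : ι) : 0 ≤ b j / lam j := div_nonneg (hb j) (hlam j).le
  calc circuitNumber b lam * ∏ j, z j ^ lam j
    _ = ∏ j, (b j / lam j * z j) ^ lam j := by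
      simp only [circuitNumber, ← prod_mul_distrib, Real.mul_rpow (hratio _) (hz _)]
    _ ≤ ∑ j, lam j * (b j / lam j * z j) :=
      Real.geom_mean_le_arith_mean_weighted univ lam _ (fun j _ ↦ (hlam j).le) hlamsum
        fun j _ ↦ mul_nonneg (hratio j) (hz j)
    _ = ∑ j, b j * z j := sum_congr rfl fun j _ ↦ by
      rw [← mul_assoc, mul_div_cancel₀ _ (hlam j).ne']

theorem circuitNumber_mul_abs_monomial_le_sum (heven : ∀ j i, Even (α j i))
    (hb : ∀ j, 0 ≤ b j) (hlam : ∀ j, 0 < lam j) (hlamsum : ∑ j, lam j = 1)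
    (hbar : ∀ i, (β i : ℝ) = ∑ j, lam j * α j i) (x : σ → ℝ) :
    circuitNumber b lam * |∏ i, x i ^ β i| ≤ ∑ j, b j * ∏ i, x i ^ α j i :=
  calc circuitNumber b lam * |∏ i, x i ^ β i|
    _ = circuitNumber b lam * ∏ j, (∏ i, |x i| ^ α j i) ^ lam j := by
      rw [prod_monomial_rpow_eq_monomial_of_eq_sum (fun i _ ↦ abs_nonneg (x i))
        (fun j _ ↦ (hlam j).le) (fun i _ ↦ hbar i)]
      simp only [abs_prod, abs_pow]
    _ ≤ ∑ j, b j * ∏ i, |x i| ^ α j i :=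
      circuitNumber_mul_prod_rpow_le_sum hb hlam hlamsum fun j ↦
        prod_nonneg fun i _ ↦ pow_nonneg (abs_nonneg (x i)) (α j i)
    _ = ∑ j, b j * ∏ i, x i ^ α j i := by simp only [(heven _ _).pow_abs]

theorem circuit_polynomial_nonneg_of_abs_le_circuit_number_general
    (heven : ∀ j i, Even (α j i)) (hb : ∀ j, 0 ≤ b j) (hlam : ∀ j, 0 < lam j)
    (hlamsum : ∑ j, lam j = 1) (hbar : ∀ i, (β i : ℝ) = ∑ j, lam j * α j i)
    {c : ℝ} (hc : |c| ≤ circuitNumber b lam) (x : σ → ℝ) :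
    0 ≤ (∑ j, b j * ∏ i, x i ^ α j i) + c * ∏ i, x i ^ β i := by
  have abs_inner_le_outer : |c * ∏ i, x i ^ β i| ≤ ∑ j, b j * ∏ i, x i ^ α j i :=
    calc |c * ∏ i, x i ^ β i|
      _ = |c| * |∏ i, x i ^ β i| := abs_mul _ _
      _ ≤ circuitNumber b lam * |∏ i, x i ^ β i| := by gcongr
      _ ≤ ∑ j, b j * ∏ i, x i ^ α j i :=
        circuitNumber_mul_abs_monomial_le_sum heven hb hlam hlamsum hbar x
  linarith [neg_le_of_abs_le abs_inner_le_outer]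

end CircuitNumber

/-- A circuit polynomial
`p(x) = Σ_{j=0}^r b_{α(j)} x^{α(j)} + b_β x^β` (with `0 ≤ r ≤ n`, positive
coefficients `b_{α(j)}`, even exponents `α(j) ∈ (2ℕ)^n`, `β ∈ ℕ^n`, and unique
positive barycentric coordinates `λ_j` with `β = Σ λ_j α(j)`, `Σ λ_j = 1`)
is nonnegative on all of `ℝ^n` provided `|b_β| ≤ Θ_p`, where
`Θ_p = Π_j (b_{α(j)}/λ_j)^{λ_j}` is the circuit number. -/
theorem circuit_polynomial_nonneg_of_abs_le_circuit_number
    (n r : ℕ) (hr : r ≤ n)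
    (α : Fin (r + 1) → Fin n → ℕ) (β : Fin n → ℕ)
    (b : Fin (r + 1) → ℝ) (c : ℝ) (lam : Fin (r + 1) → ℝ)
    (hb : ∀ j, 0 < b j)
    (heven : ∀ j i, Even (α j i))
    (hlam : ∀ j, 0 < lam j)
    (hlamsum : ∑ j, lam j = 1)
    (hbar : ∀ i, (β i : ℝ) = ∑ j, lam j * (α j i : ℝ))
    (huniq : ∀ mu : Fin (r + 1) → ℝ, (∀ j, 0 < mu j) → ∑ j, mu j = 1 →
        (∀ i, (β i : ℝ) = ∑ j, mu j * (α j i : ℝ)) → mu = lam)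
    (hc : |c| ≤ ∏ j, (b j / lam j) ^ lam j) :
    ∀ x : Fin n → ℝ,
      0 ≤ (∑ j, b j * ∏ i, x i ^ α j i) + c * ∏ i, x i ^ β i := by
  exact circuit_polynomial_nonneg_of_abs_le_circuit_number_general heven (fun j ↦ (hb j).le)
    hlam hlamsum hbar hc
end

section
/- For every n ∈ ℕ, C_{n,2} ⊆ Σ_{n,2}: every n-variate polynomial of degree at most 2 that is a sum of nonnegative circuit polynomials is a sum of squares of polynomials. -/
open MvPolynomial

/-- `p` is a circuit polynomial in `n` variables:
`p = Σ_{j=0}^r b_{α(j)} x^{α(j)} + b_β x^β` with `0 ≤ r ≤ n`, positive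
coefficients `b_{α(j)}`, even exponents `α(j) ∈ (2ℕ)^n`, `β ∈ ℕ^n`, such that
there exist unique positive barycentric coordinates `λ_j` with
`β = Σ λ_j α(j)` and `Σ λ_j = 1`. -/
def IsCircuitPoly {n : ℕ} (p : MvPolynomial (Fin n) ℝ) : Prop :=
  ∃ r : ℕ, r ≤ n ∧
    ∃ (α : Fin (r + 1) → (Fin n →₀ ℕ)) (β : Fin n →₀ ℕ)
      (b : Fin (r + 1) → ℝ) (c : ℝ) (lam : Fin (r + 1) → ℝ),
      (∀ j, 0 < b j) ∧ (∀ j i, Even (α j i)) ∧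
      (∀ j, 0 < lam j) ∧ (∑ j, lam j = 1) ∧
      (∀ i, (β i : ℝ) = ∑ j, lam j * (α j i : ℝ)) ∧
      (∀ mu : Fin (r + 1) → ℝ, (∀ j, 0 < mu j) → ∑ j, mu j = 1 →
        (∀ i, (β i : ℝ) = ∑ j, mu j * (α j i : ℝ)) → mu = lam) ∧
      p = (∑ j, monomial (α j) (b j)) + monomial β c

/-- `p` is a sum of nonnegative circuit polynomials. -/
def IsSONC {n : ℕ} (p : MvPolynomial (Fin n) ℝ) : Prop :=
  ∃ (k : ℕ) (q : Fin k → MvPolynomial (Fin n) ℝ),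
    (∀ m, IsCircuitPoly (q m) ∧ ∀ x : Fin n → ℝ, 0 ≤ eval x (q m)) ∧
    p = ∑ m, q m

/-- `C_{n,2d}`: the polynomials of degree at most `2d` in `n` variables that
are sums of nonnegative circuit polynomials. -/
def SONCCone (n d : ℕ) : Set (MvPolynomial (Fin n) ℝ) :=
  {p | p.totalDegree ≤ 2 * d ∧ IsSONC p}

/-- `Σ_{n,2d}`: the polynomials of degree at most `2d` in `n` variables that
are finite sums of squares of polynomials. -/
def SOSCone (n d : ℕ) : Set (MvPolynomial (Fin n) ℝ) :=
  {p | p.totalDegree ≤ 2 * d ∧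
    ∃ (k : ℕ) (s : Fin k → MvPolynomial (Fin n) ℝ), p = ∑ m, s m ^ 2}

/-- `P_{n,2d}`: the polynomials of degree at most `2d` in `n` variables that
are nonnegative on all of `ℝ^n`. -/
def PosCone (n d : ℕ) : Set (MvPolynomial (Fin n) ℝ) :=
  {p | p.totalDegree ≤ 2 * d ∧ ∀ x : Fin n → ℝ, 0 ≤ eval x p}

/-!
A sum of nonnegative circuit polynomials is nonnegative, and every nonnegative quadratic polynomial
is a sum of squares. With `z = (1, x_1, …, x_n)`, such a polynomial is `zᵀ M z` for a symmetric
matrix `M`, whose quadratic form is nonnegative on the affine hyperplane `v_0 = 1`, hence by scaling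
wherever `v_0 ≠ 0`. For `v_0 = 0` and `e` in the hyperplane, adding the inequalities at `e + t v`
and `e - t v` gives `Q(e) + t² Q(v) ≥ 0` for all `t`, so `Q(v) ≥ 0`. Thus `M` is positive
semidefinite, and a factorization `M = Bᵀ B` makes `zᵀ M z` the sum of the squares of the entries
of `B z`.
-/

open scoped Matrix

section QuadraticForm

lemma quadraticMap_map_add_add_map_sub {R V N : Type*} [CommRing R] [AddCommGroup V] [Module R V]
    [AddCommGroup N] [Module R N] (Q : QuadraticMap R V N) (x y : V) :
    Q (x + y) + Q (x - y) = 2 • (Q x + Q y) := by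
  rw [sub_eq_add_neg, QuadraticMap.map_add Q x y, QuadraticMap.map_add Q x (-y), Q.map_neg,
    QuadraticMap.polar_neg_right]
  abel

variable {𝕜 : Type*} [Field 𝕜] [LinearOrder 𝕜] [IsStrictOrderedRing 𝕜]

lemma nonneg_of_forall_nonneg_add_mul_sq {a c : 𝕜} (h : ∀ t : 𝕜, 0 ≤ a + c * t ^ 2) :
    0 ≤ c := by
  by_contra! hc
  have ha : 0 ≤ a := by simpa using h 0
  have ht : 1 ≤ 1 - a / c :=
    (le_sub_self_iff 1).mpr (div_nonpos_of_nonneg_of_nonpos ha hc.le)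
  refine (h (1 - a / c)).not_gt ?_
  calc a + c * (1 - a / c) ^ 2
      ≤ a + c * (1 - a / c) := by
        gcongr a + ?_
        exact mul_le_mul_of_nonpos_left (le_self_pow₀ ht two_ne_zero) hc.le
    _ = c := by rw [mul_sub, mul_div_cancel₀ a hc.ne]; ring
    _ < 0 := hc

lemma quadraticForm_nonneg_of_nonneg_on_hyperplane {V : Type*} [AddCommGroup V] [Module 𝕜 V]
    (Q : QuadraticForm 𝕜 V) {φ : Module.Dual 𝕜 V} (hφ : φ ≠ 0)
    (h : ∀ v, φ v = 1 → 0 ≤ Q v) (v : V) : 0 ≤ Q v := by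
  by_cases hv : φ v = 0
  · obtain ⟨e, he⟩ : ∃ e, φ e = 1 := LinearMap.surjective hφ 1
    refine nonneg_of_forall_nonneg_add_mul_sq (a := Q e) fun t => ?_
    have hadd : 0 ≤ Q (e + t • v) := h _ (by simp [he, hv])
    have hsub : 0 ≤ Q (e - t • v) := h _ (by simp [he, hv])
    have hpar := quadraticMap_map_add_add_map_sub Q e (t • v)
    rw [Q.map_smul, smul_eq_mul, two_nsmul] at hpar
    linarith
  · have hscale : Q v = φ v * φ v * Q ((φ v)⁻¹ • v) := by
      rw [← smul_eq_mul, ← Q.map_smul, smul_inv_smul₀ hv]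
    rw [hscale]
    exact mul_nonneg (mul_self_nonneg _) (h _ (by simp [hv]))

end QuadraticForm

open scoped MatrixOrder in
lemma isSumSq_dotProduct_map_mulVec_of_posSemidef {ι A : Type*} [Fintype ι] [CommSemiring A]
    {M : Matrix ι ι ℝ} (hM : M.PosSemidef) (f : ℝ →+* A) (z : ι → A) :
    IsSumSq (z ⬝ᵥ M.map f *ᵥ z) := by
  classical
  obtain ⟨B, rfl⟩ := CStarAlgebra.nonneg_iff_eq_star_mul_self.mp hM.nonneg
  have hfactor : z ⬝ᵥ (star B * B).map f *ᵥ z = (B.map f *ᵥ z) ⬝ᵥ (B.map f *ᵥ z) := by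
    rw [Matrix.star_eq_conjTranspose, Matrix.conjTranspose_eq_transpose_of_trivial,
      Matrix.map_mul, Matrix.transpose_map, ← Matrix.mulVec_mulVec,
      Matrix.dotProduct_transpose_mulVec, dotProduct_comm]
  rw [hfactor]
  exact IsSumSq.sum_mul_self _ _

lemma isSumSq_map {R S F : Type*} [NonUnitalNonAssocSemiring R] [NonUnitalNonAssocSemiring S]
    [FunLike F R S] [NonUnitalRingHomClass F R S] (f : F) {a : R} (ha : IsSumSq a) :
    IsSumSq (f a) := by
  induction ha with
  | zero => simp
  | sq_add b _ ih => simpa using ih.sq_add (f b)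

lemma isSumSq_iff_exists_fin_sum_sq {R : Type*} [CommSemiring R] {a : R} :
    IsSumSq a ↔ ∃ (k : ℕ) (s : Fin k → R), a = ∑ m, s m ^ 2 := by
  constructor
  · intro ha
    induction ha with
    | zero => exact ⟨0, Fin.elim0, by simp⟩
    | sq_add b _ ih =>
      obtain ⟨k, s, rfl⟩ := ih
      exact ⟨k + 1, Fin.cons b s, by simp [Fin.sum_univ_succ, sq]⟩
  · rintro ⟨k, s, rfl⟩
    exact IsSumSq.sum_sq _ _

section GramMatrix

variable {σ R : Type*} [CommSemiring R]

/-- The vector `z = (1, x_i)_i` of monomials of degree at most one; the index `none` stands for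
the constant monomial. -/
noncomputable def affineMonomial (i : Option σ) : MvPolynomial σ R :=
  i.elim 1 X

lemma exists_monomial_eq_affineMonomial_mul {d : ℕ} {m : σ →₀ ℕ} (hm : m.degree ≤ d + 1) :
    ∃ (i : Option σ) (m' : σ →₀ ℕ), m'.degree ≤ d ∧
      monomial m (1 : R) = affineMonomial i * monomial m' 1 := by
  obtain rfl | hne := eq_or_ne m 0
  · exact ⟨none, 0, by simp, by simp [affineMonomial]⟩
  obtain ⟨i, hi⟩ := Finsupp.ne_iff.mp hne
  obtain ⟨m', rfl⟩ : ∃ m', m = Finsupp.single i 1 + m' :=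
    exists_add_of_le (Finsupp.single_le_iff.mpr (Nat.one_le_iff_ne_zero.mpr hi))
  rw [map_add, Finsupp.degree_single] at hm
  exact ⟨some i, m', by lia, by simp [affineMonomial, X, monomial_mul]⟩

lemma exists_monomial_eq_affineMonomial_mul_affineMonomial {m : σ →₀ ℕ} (hm : m.degree ≤ 2) :
    ∃ i j : Option σ, monomial m (1 : R) = affineMonomial i * affineMonomial j := by
  obtain ⟨i, m₁, hm₁, hi⟩ := exists_monomial_eq_affineMonomial_mul (R := R) hm
  obtain ⟨j, m₀, hm₀, hj⟩ := exists_monomial_eq_affineMonomial_mul (R := R) (d := 0) hm₁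
  obtain rfl : m₀ = 0 := (Finsupp.degree_eq_zero_iff m₀).mp (Nat.le_zero.mp hm₀)
  exact ⟨i, j, by rw [hi, hj]; simp⟩

variable [Fintype σ]

/-- The polynomial `zᵀ M z` with Gram matrix `M`, where `z = (1, x_i)_i`, as a linear function
of `M`. -/
noncomputable def gramPolynomial : Matrix (Option σ) (Option σ) R →ₗ[R] MvPolynomial σ R where
  toFun M := affineMonomial ⬝ᵥ M.map C *ᵥ affineMonomial
  map_add' M N := by
    rw [Matrix.map_add _ (map_add C), Matrix.add_mulVec, dotProduct_add]
  map_smul' c M := by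
    have hmap : (c • M).map C = c • M.map (C : R → MvPolynomial σ R) := by
      ext1 i j; simp [smul_eq_C_mul]
    rw [hmap, Matrix.smul_mulVec, dotProduct_smul, RingHom.id_apply]

lemma gramPolynomial_apply (M : Matrix (Option σ) (Option σ) R) :
    gramPolynomial M = affineMonomial ⬝ᵥ M.map C *ᵥ affineMonomial :=
  rfl

lemma gramPolynomial_single [DecidableEq σ] (i j : Option σ) :
    gramPolynomial (Matrix.single i j (1 : R)) = affineMonomial i * affineMonomial j := by
  rw [gramPolynomial_apply, Matrix.map_single _ _ _ C, C_1, Matrix.single_mulVec, one_mul]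
  exact dotProduct_single _ _ _

lemma gramPolynomial_transpose (M : Matrix (Option σ) (Option σ) R) :
    gramPolynomial Mᵀ = gramPolynomial M := by
  rw [gramPolynomial_apply, Matrix.transpose_map, Matrix.dotProduct_transpose_mulVec,
    gramPolynomial_apply]

lemma eval_gramPolynomial (M : Matrix (Option σ) (Option σ) R) (x : σ → R) :
    eval x (gramPolynomial M) =
      (fun i : Option σ => i.elim 1 x) ⬝ᵥ M *ᵥ (fun i : Option σ => i.elim 1 x) := by
  have hz : eval x ∘ affineMonomial = fun i : Option σ => i.elim 1 x := by
    ext (_ | i) <;> simp [affineMonomial]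
  have hM : (M.map (C : R → MvPolynomial σ R)).map (eval x) = M := by
    ext i j; simp
  rw [gramPolynomial_apply, RingHom.map_dotProduct, hz]
  congr 1
  ext i
  rw [Function.comp_apply, RingHom.map_mulVec, hz, hM]

lemma restrictTotalDegree_two_le_range_gramPolynomial :
    restrictTotalDegree σ R 2 ≤ LinearMap.range gramPolynomial := by
  classical
  rw [restrictTotalDegree, restrictSupport_eq_span, Submodule.span_le]
  rintro _ ⟨m, hm, rfl⟩
  obtain ⟨i, j, hij⟩ := exists_monomial_eq_affineMonomial_mul_affineMonomial (R := R) (m := m) hm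
  exact ⟨Matrix.single i j 1, by rw [gramPolynomial_single, ← hij]⟩

lemma exists_isSymm_gramPolynomial_eq [Invertible (2 : R)] {p : MvPolynomial σ R}
    (hp : p.totalDegree ≤ 2) :
    ∃ M : Matrix (Option σ) (Option σ) R, M.IsSymm ∧ gramPolynomial M = p := by
  obtain ⟨M, rfl⟩ := restrictTotalDegree_two_le_range_gramPolynomial
    ((mem_restrictTotalDegree σ 2 p).mpr hp)
  refine ⟨⅟(2 : R) • (M + Mᵀ), (Matrix.isSymm_add_transpose_self M).smul _, ?_⟩
  rw [map_smul, map_add, gramPolynomial_transpose, ← two_smul R, invOf_smul_smul]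

lemma posSemidef_of_eval_gramPolynomial_nonneg {M : Matrix (Option σ) (Option σ) ℝ}
    (hM : M.IsSymm) (h : ∀ x, 0 ≤ eval x (gramPolynomial M)) : M.PosSemidef := by
  classical
  have hQ (v : Option σ → ℝ) : M.toQuadraticForm' v = v ⬝ᵥ M *ᵥ v :=
    Matrix.toLinearMap₂'_apply' M v v
  have hproj : (LinearMap.proj none : Module.Dual ℝ (Option σ → ℝ)) ≠ 0 := fun hzero =>
    one_ne_zero (LinearMap.congr_fun hzero 1)
  have hM_herm : M.IsHermitian := by
    rwa [Matrix.IsHermitian, Matrix.conjTranspose_eq_transpose_of_trivial]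
  refine .of_dotProduct_mulVec_nonneg hM_herm fun v => ?_
  rw [star_trivial, ← hQ]
  refine quadraticForm_nonneg_of_nonneg_on_hyperplane _ hproj (fun v hv => ?_) v
  have hv_elim : (fun i : Option σ => i.elim 1 fun i => v (some i)) = v := by
    ext (_ | i)
    · exact hv.symm
    · rfl
  have hv_eval := h fun i => v (some i)
  rwa [eval_gramPolynomial, hv_elim, ← hQ] at hv_eval

end GramMatrix

section Rename

variable {σ τ R : Type*} [CommSemiring R]

lemma totalDegree_rename_of_injective {f : σ → τ} (hf : Function.Injective f)
    (p : MvPolynomial σ R) : (rename f p).totalDegree = p.totalDegree := by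
  classical
  simp [totalDegree, support_rename_of_injective hf, Finset.sup_image, Function.comp_def,
    Finsupp.sum_mapDomain_index]

lemma forall_eval_rename_iff_of_injective {f : σ → τ} (hf : Function.Injective f)
    {p : MvPolynomial σ R} {P : R → Prop} :
    (∀ x, P (eval x (rename f p))) ↔ ∀ x, P (eval x p) := by
  simp_rw [eval_rename]
  exact (hf.surjective_comp_right.forall (p := fun x => P (eval x p))).symm

end Rename

theorem SONCCone_subset_SOSCone_degree_two_general {σ : Type*} {p : MvPolynomial σ ℝ}
    (hdeg : p.totalDegree ≤ 2) (hp : ∀ x, 0 ≤ eval x p) : IsSumSq p := by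
  obtain ⟨n, f, hf, q, rfl⟩ := exists_fin_rename p
  rw [totalDegree_rename_of_injective hf] at hdeg
  rw [forall_eval_rename_iff_of_injective hf] at hp
  obtain ⟨M, hM, rfl⟩ := exists_isSymm_gramPolynomial_eq hdeg
  have hM_psd : M.PosSemidef := posSemidef_of_eval_gramPolynomial_nonneg hM hp
  rw [gramPolynomial_apply]
  exact isSumSq_map (rename f)
    (isSumSq_dotProduct_map_mulVec_of_posSemidef hM_psd C affineMonomial)

lemma mem_SOSCone_iff {n d : ℕ} {p : MvPolynomial (Fin n) ℝ} :
    p ∈ SOSCone n d ↔ p.totalDegree ≤ 2 * d ∧ IsSumSq p :=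
  and_congr_right fun _ => isSumSq_iff_exists_fin_sum_sq.symm

lemma SONCCone_subset_PosCone (n d : ℕ) : SONCCone n d ⊆ PosCone n d := by
  rintro _ ⟨hdeg, k, q, hq, rfl⟩
  refine ⟨hdeg, fun x => ?_⟩
  rw [map_sum]
  exact Finset.sum_nonneg fun m _ => (hq m).2 x

/-- For every `n ∈ ℕ`, `C_{n,2} ⊆ Σ_{n,2}`: every `n`-variate
polynomial of degree at most `2` that is a sum of nonnegative circuit
polynomials is a sum of squares of polynomials. -/
theorem SONCCone_subset_SOSCone_degree_two (n : ℕ) :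
    SONCCone n 1 ⊆ SOSCone n 1 := fun _ hp =>
  mem_SOSCone_iff.mpr ⟨hp.1,
    SONCCone_subset_SOSCone_degree_two_general hp.1 (SONCCone_subset_PosCone n 1 hp).2⟩
end

section
/- C_{2,4} ⊆ Σ_{2,4}: every bivariate polynomial of degree at most 4 that is a sum of nonnegative circuit polynomials is a sum of squares of polynomials. -/
open MvPolynomial

/-!
Restricted to lines through the origin, `0 ≤ q ≤ p` forces `deg q ≤ deg p`, so no cancellation of
degrees occurs and every circuit polynomial in the sum has degree at most `4`. Its outer exponents
are then twice lattice points of the simplex `{x ≥ 0, |x| ≤ 2}`, and as at most three of them occur,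
a determinant computation shows that the barycentric coordinates of the inner exponent `β` lie in
`¼ℤ`. Four quarters distributed over at most three points put two on a single one: the weights are
`¼, ¼, ½` at outer exponents `2a`, `2b`, `2c`, not necessarily distinct. Hence `a + b = 2m` and
`β = m + c` for a lattice point `m`. After scaling the variables, the polynomial is a positive
multiple of one with outer coefficients `¼, ¼, ½` and inner coefficient `e`. Evaluation at sign
vectors shows that either all its terms are monomial squares or `e² ≤ 1`, and in the latter case
`¼ x^2a + ¼ x^2b + ½ x^2c + e x^β = ¼ (x^a - x^b)² + ½ (x^m + e x^c)² + ½ (1 - e²) x^2c`.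
-/

open scoped Topology

section SumsOfSquares

theorem exists_fin_sum_sq_of_isSumSq {R : Type*} [CommSemiring R] {p : R} (hp : IsSumSq p) :
    ∃ (k : ℕ) (s : Fin k → R), p = ∑ m, s m ^ 2 := by
  induction hp with
  | zero => exact ⟨0, Fin.elim0, by simp⟩
  | sq_add a _ ih =>
    obtain ⟨k, s, rfl⟩ := ih
    exact ⟨k + 1, Fin.cons a s, by simp [Fin.sum_univ_succ, sq]⟩

theorem isSumSq_smul {A : Type*} [CommSemiring A] [Algebra ℝ A] {a : ℝ} (ha : 0 ≤ a) {p : A}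
    (hp : IsSumSq p) : IsSumSq (a • p) := by
  rw [Algebra.smul_def, ← Real.mul_self_sqrt ha, map_mul]
  exact (IsSumSq.mul_self _).mul hp

theorem isSumSq_monomial_two_nsmul {σ : Type*} {a : ℝ} (ha : 0 ≤ a) (d : σ →₀ ℕ) :
    IsSumSq (monomial (2 • d) a) := by
  have hsq : monomial (2 • d) a = a • (monomial d 1 * monomial d 1) := by
    simp [monomial_mul, smul_monomial, two_nsmul]
  exact hsq ▸ isSumSq_smul ha (IsSumSq.mul_self _)

theorem isSumSq_quarter_form {A : Type*} [CommRing A] [Algebra ℝ A] {e : ℝ} (he : e ^ 2 ≤ 1)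
    {x y u : A} (hu : u * u = x * y) (v : A) :
    IsSumSq ((1 / 4 : ℝ) • (x * x) + (1 / 4 : ℝ) • (y * y) + (1 / 2 : ℝ) • (v * v) +
      e • (u * v)) := by
  have hsquares : (1 / 4 : ℝ) • (x * x) + (1 / 4 : ℝ) • (y * y) + (1 / 2 : ℝ) • (v * v) +
      e • (u * v) =
        (1 / 4 : ℝ) • ((x - y) * (x - y)) + (1 / 2 : ℝ) • ((u + e • v) * (u + e • v)) +
          ((1 - e ^ 2) / 2) • (v * v) := by
    have hcorrection : (1 / 2 : ℝ) • (u * u - x * y) = 0 := by rw [hu, sub_self, smul_zero]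
    rw [← sub_zero (_ + e • (u * v)), ← neg_zero, ← hcorrection]
    algebra
  rw [hsquares]
  exact ((isSumSq_smul (by norm_num) (IsSumSq.mul_self _)).add
    (isSumSq_smul (by norm_num) (IsSumSq.mul_self _))).add
    (isSumSq_smul (by linarith) (IsSumSq.mul_self _))

end SumsOfSquares

section Degree

theorem degree_le_of_eval_nonneg_of_eval_le {P Q : Polynomial ℝ} (hQ : ∀ t, 0 ≤ Q.eval t)
    (hQP : ∀ t, Q.eval t ≤ P.eval t) : Q.degree ≤ P.degree := by
  by_contra! hdeg
  have hQ0 : Q ≠ 0 := by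
    rintro rfl
    simp at hdeg
  have hratio : ∀ᶠ t in Filter.atTop, P.eval t / Q.eval t < 1 :=
    (Polynomial.div_tendsto_atTop_zero_of_degree_lt P Q hdeg).eventually_lt_const one_pos
  obtain ⟨t, hlt, hroot⟩ := (hratio.and (Polynomial.eventually_atTop_not_isRoot Q hQ0)).exists
  rw [div_lt_one ((hQ t).lt_of_ne' hroot)] at hlt
  exact hlt.not_ge (hQP t)

variable {σ : Type*}

/-- The restriction `t ↦ p (t z)` of a polynomial to the line through the origin spanned by `z`,
used to reduce degree comparisons to one variable. -/
noncomputable def restrictToLine (z : σ → ℝ) : MvPolynomial σ ℝ →ₐ[ℝ] Polynomial ℝ :=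
  aeval fun i => Polynomial.C (z i) * Polynomial.X

theorem eval_restrictToLine (z : σ → ℝ) (p : MvPolynomial σ ℝ) (t : ℝ) :
    (restrictToLine z p).eval t = eval (fun i => z i * t) p := by
  have hcomp : (Polynomial.aeval t).comp (restrictToLine z) = aeval fun i => z i * t := by
    ext i
    simp [restrictToLine]
  simpa [Polynomial.coe_aeval_eq_eval, aeval_eq_eval] using DFunLike.congr_fun hcomp p

theorem restrictToLine_monomial (z : σ → ℝ) (d : σ →₀ ℕ) (a : ℝ) :
    restrictToLine z (monomial d a) =
      Polynomial.monomial d.degree (eval z (monomial d a)) := by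
  rw [restrictToLine, aeval_monomial, eval_monomial, ← Polynomial.C_mul_X_pow_eq_monomial]
  simp only [Finsupp.prod, mul_pow, Finset.prod_mul_distrib, Finset.prod_pow_eq_pow_sum,
    Finsupp.degree_apply, Polynomial.algebraMap_apply, Algebra.algebraMap_self, RingHom.id_apply,
    map_mul, map_prod, map_pow, mul_assoc]

theorem coeff_restrictToLine (z : σ → ℝ) (p : MvPolynomial σ ℝ) (k : ℕ) :
    (restrictToLine z p).coeff k = eval z (homogeneousComponent k p) := by
  induction p using MvPolynomial.induction_on' with
  | monomial d a =>
    rw [restrictToLine_monomial, homogeneousComponent_of_mem (isHomogeneous_monomial a rfl),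
      Polynomial.coeff_monomial]
    split_ifs <;> simp_all
  | add p q hp hq => simp [hp, hq]

theorem totalDegree_le_of_eval_nonneg_of_eval_le {p q : MvPolynomial σ ℝ}
    (hq : ∀ x, 0 ≤ eval x q) (hqp : ∀ x, eval x q ≤ eval x p) :
    q.totalDegree ≤ p.totalDegree := by
  refine Finset.sup_le fun d hd => ?_
  change d.degree ≤ p.totalDegree
  by_contra! hdeg
  have hcomp : homogeneousComponent d.degree q = 0 := by
    refine MvPolynomial.funext fun z => ?_
    have hline : (restrictToLine z q).degree ≤ (restrictToLine z p).degree :=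
      degree_le_of_eval_nonneg_of_eval_le (fun t => by simpa only [eval_restrictToLine] using hq _)
        fun t => by simpa only [eval_restrictToLine] using hqp _
    have hp : (restrictToLine z p).degree < d.degree := by
      rw [Polynomial.degree_lt_iff_coeff_zero]
      intro m hm
      rw [coeff_restrictToLine, homogeneousComponent_eq_zero _ _ (hdeg.trans_le hm), map_zero]
    rw [← coeff_restrictToLine, map_zero]
    exact Polynomial.coeff_eq_zero_of_degree_lt (hline.trans_lt hp)
  have hcoeff := coeff_homogeneousComponent d.degree q d
  rw [hcomp, coeff_zero, if_pos rfl] at hcoeff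
  exact mem_support_iff.mp hd hcoeff.symm

end Degree

theorem exists_eq_two_nsmul_of_even {σ : Type*} {d : σ →₀ ℕ} (hd : ∀ i, Even (d i)) :
    ∃ e : σ →₀ ℕ, d = 2 • e := by
  refine ⟨d.mapRange (· / 2) rfl, Finsupp.ext fun i => ?_⟩
  simp [Nat.two_mul_div_two_of_even (hd i)]

section NormalizedMonomial

variable {σ : Type*} {z : σ → ℝ}

/-- The scalar multiple of the monomial `x ^ d` that takes the value `1` at `z`, for `z` off the
coordinate hyperplanes. -/
noncomputable def normalizedMonomial (z : σ → ℝ) (d : σ →₀ ℕ) : MvPolynomial σ ℝ :=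
  monomial d (eval z (monomial d 1))⁻¹

theorem normalizedMonomial_add (z : σ → ℝ) (d e : σ →₀ ℕ) :
    normalizedMonomial z (d + e) = normalizedMonomial z d * normalizedMonomial z e := by
  have hmul : (monomial (d + e) 1 : MvPolynomial σ ℝ) = monomial d 1 * monomial e 1 := by
    rw [monomial_mul, one_mul]
  rw [normalizedMonomial, normalizedMonomial, normalizedMonomial, monomial_mul, hmul, map_mul,
    mul_inv]

theorem normalizedMonomial_two_nsmul (z : σ → ℝ) (d : σ →₀ ℕ) :
    normalizedMonomial z (2 • d) = normalizedMonomial z d * normalizedMonomial z d := by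
  rw [two_nsmul, normalizedMonomial_add]

theorem eval_monomial_eq_mul (z : σ → ℝ) (d : σ →₀ ℕ) (a : ℝ) :
    eval z (monomial d a) = a * eval z (monomial d 1) := by
  simp [eval_monomial]

theorem eval_monomial_one_ne_zero (hz : ∀ i, z i ≠ 0) (d : σ →₀ ℕ) :
    eval z (monomial d 1) ≠ 0 := by
  rw [eval_monomial, one_mul]
  exact Finset.prod_ne_zero_iff.mpr fun i _ => pow_ne_zero _ (hz i)

theorem eval_mul_normalizedMonomial (hz : ∀ i, z i ≠ 0) (ε : σ → ℝ) (d : σ →₀ ℕ) :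
    eval (ε * z) (normalizedMonomial z d) = eval ε (monomial d 1) := by
  have hprod : eval (ε * z) (monomial d 1) = eval ε (monomial d 1) * eval z (monomial d 1) := by
    simp [eval_monomial, Finsupp.prod, mul_pow, Finset.prod_mul_distrib]
  rw [normalizedMonomial, eval_monomial_eq_mul, hprod, mul_comm,
    mul_inv_cancel_right₀ (eval_monomial_one_ne_zero hz d)]

theorem monomial_eq_smul_normalizedMonomial (hz : ∀ i, z i ≠ 0) (d : σ →₀ ℕ) (a : ℝ) :
    monomial d a = eval z (monomial d a) • normalizedMonomial z d := by
  rw [normalizedMonomial, smul_monomial, smul_eq_mul, eval_monomial_eq_mul z d a,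
    mul_inv_cancel_right₀ (eval_monomial_one_ne_zero hz d)]

theorem eval_monomial_two_nsmul_of_mul_self_eq_one {ε : σ → ℝ} (hε : ∀ i, ε i * ε i = 1)
    (d : σ →₀ ℕ) : eval ε (monomial (2 • d) 1) = 1 := by
  simp [eval_monomial, Finsupp.prod, pow_mul, pow_two, hε, Finsupp.smul_apply]

theorem sq_le_one_or_even_of_forall_sign {d : σ →₀ ℕ} {e : ℝ}
    (h : ∀ ε : σ → ℝ, (∀ i, ε i * ε i = 1) → 0 ≤ 1 + e * eval ε (monomial d 1)) :
    e ^ 2 ≤ 1 ∨ 0 ≤ e ∧ ∀ i, Even (d i) := by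
  classical
  have he : -1 ≤ e := by
    have h1 := h 1 fun _ => mul_one 1
    rw [eval_monomial] at h1
    simp only [Pi.one_apply, one_pow, Finsupp.prod_fun_one, mul_one] at h1
    linarith
  by_cases heven : ∀ i, Even (d i)
  · rcases le_total 0 e with h0 | h0
    · exact .inr ⟨h0, heven⟩
    · exact .inl (by nlinarith)
  · push Not at heven
    obtain ⟨i, hi⟩ := heven
    rw [Nat.not_even_iff_odd] at hi
    have hflip : eval (Function.update 1 i (-1)) (monomial d 1) = (-1 : ℝ) := by
      rw [eval_monomial, one_mul, Finsupp.prod,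
        Finset.prod_eq_single_of_mem i (Finsupp.mem_support_iff.mpr hi.pos.ne')
          fun l _ hl => by simp [Function.update_of_ne hl],
        Function.update_self, hi.neg_one_pow]
    have h1 := h (Function.update 1 i (-1)) fun l => by
      rcases eq_or_ne l i with rfl | hl <;> simp [*]
    rw [hflip] at h1
    exact .inl (by nlinarith)

end NormalizedMonomial

section LatticeWeights

theorem exists_eq_single_add_single_add_single {ι : Type*} [Fintype ι] [DecidableEq ι]
    (hcard : Fintype.card ι < 4) {n : ι → ℕ} (hn : ∑ j, n j = 4) :
    ∃ i j k, n = Pi.single i 1 + Pi.single j 1 + Pi.single k 2 := by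
  obtain ⟨k, -, hk⟩ : ∃ k ∈ Finset.univ, 1 < n k :=
    Finset.exists_lt_of_sum_lt (by simpa [hn] using hcard)
  obtain ⟨m, hm⟩ : ∃ m, n = m + Pi.single k 2 :=
    ⟨n - Pi.single k 2, (tsub_add_cancel_of_le fun l => by
      rcases eq_or_ne l k with rfl | hl <;> simp [*, Nat.succ_le_iff]).symm⟩
  have hm_sum : ∑ j, m j = 2 := by
    simpa [hm, Finset.sum_add_distrib] using hn
  obtain ⟨i, j, hij⟩ := Multiset.card_eq_two.mp
    (show (Finsupp.toMultiset (Finsupp.equivFunOnFinite.symm m)).card = 2 by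
      simpa [Finsupp.card_toMultiset, Finsupp.sum_fintype] using hm_sum)
  refine ⟨i, j, k, hm.trans (congrArg (· + _) (funext fun l => ?_))⟩
  have hcount := congrArg (Multiset.count l) hij
  rw [Finsupp.count_toMultiset] at hcount
  simpa [Multiset.count_cons, Multiset.count_singleton, Pi.single_apply, add_comm] using hcount

theorem exists_eq_quarter_single_add {ι : Type*} [Fintype ι] [DecidableEq ι]
    (hcard : Fintype.card ι < 4) {w : ι → ℝ} (hw : ∀ j, 0 ≤ w j) (hsum : ∑ j, w j = 1)
    (hint : ∀ j, ∃ m : ℤ, 4 * w j = m) :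
    ∃ i j k, w = Pi.single i (1 / 4) + Pi.single j (1 / 4) + Pi.single k (1 / 2) := by
  have hnat (j : ι) : ∃ m : ℕ, w j = m / 4 := by
    obtain ⟨m, hm⟩ := hint j
    lift m to ℕ using by exact_mod_cast hm ▸ mul_nonneg zero_le_four (hw j)
    exact ⟨m, by push_cast at hm; linarith⟩
  choose n hn using hnat
  have hn_sum : ∑ j, n j = 4 := by
    simp only [hn, ← Finset.sum_div] at hsum
    rify
    linarith
  obtain ⟨i, j, k, hijk⟩ := exists_eq_single_add_single_add_single hcard hn_sum
  refine ⟨i, j, k, funext fun l => ?_⟩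
  rw [hn l, hijk]
  simp only [Pi.add_apply, Pi.single_apply]
  split_ifs <;> norm_num

theorem det_dvd_two_mul_sub {p₁ p₂ q₁ q₂ r₁ r₂ : ℕ} (hp : p₁ + p₂ ≤ 2) (hq : q₁ + q₂ ≤ 2)
    (hr : r₁ + r₂ ≤ 2) {D : ℤ} (hD : D = (q₁ - p₁) * (r₂ - p₂) - (q₂ - p₂) * (r₁ - p₁))
    (hD0 : D ≠ 0) :
    (D ∣ 2 * (q₁ - p₁) ∧ D ∣ 2 * (q₂ - p₂)) ∧ D ∣ 2 * (r₁ - p₁) ∧ D ∣ 2 * (r₂ - p₂) := by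
  let S := (Finset.range 3 ×ˢ Finset.range 3).filter fun x : ℕ × ℕ => x.1 + x.2 ≤ 2
  have hS {x₁ x₂ : ℕ} (hx : x₁ + x₂ ≤ 2) : (x₁, x₂) ∈ S := by
    simp only [S, Finset.mem_filter, Finset.mem_product, Finset.mem_range]
    lia
  -- The determinant is `±1`, `±2` or, for the vertices of the simplex only, `±4`.
  have hfinite : ∀ p ∈ S, ∀ q ∈ S, ∀ r ∈ S,
      let D : ℤ := (q.1 - p.1) * (r.2 - p.2) - (q.2 - p.2) * (r.1 - p.1)
      D ≠ 0 → (D ∣ 2 * (q.1 - p.1) ∧ D ∣ 2 * (q.2 - p.2)) ∧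
        D ∣ 2 * (r.1 - p.1) ∧ D ∣ 2 * (r.2 - p.2) := by
    decide
  subst hD
  exact hfinite _ (hS hp) _ (hS hq) _ (hS hr) hD0

theorem exists_int_eq_four_mul_of_det_dvd {d₁ d₂ e₁ e₂ g₁ g₂ D : ℤ} {x y : ℝ}
    (hD : D = d₁ * e₂ - d₂ * e₁) (hD0 : D ≠ 0) (hd : D ∣ 2 * d₁ ∧ D ∣ 2 * d₂)
    (he : D ∣ 2 * e₁ ∧ D ∣ 2 * e₂) (hg₁ : (g₁ : ℝ) = 2 * (x * d₁ + y * e₁))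
    (hg₂ : (g₂ : ℝ) = 2 * (x * d₂ + y * e₂)) :
    (∃ m : ℤ, 4 * x = m) ∧ ∃ m : ℤ, 4 * y = m := by
  obtain ⟨⟨s₁, hs₁⟩, s₂, hs₂⟩ := hd
  obtain ⟨⟨t₁, ht₁⟩, t₂, ht₂⟩ := he
  rify at hD hD0 hs₁ hs₂ ht₁ ht₂
  refine ⟨⟨g₁ * t₂ - g₂ * t₁, mul_left_cancel₀ hD0 ?_⟩,
    g₂ * s₁ - g₁ * s₂, mul_left_cancel₀ hD0 ?_⟩
  · push_cast
    linear_combination g₁ * ht₂ - g₂ * ht₁ - 2 * e₂ * hg₁ + 2 * e₁ * hg₂ + 4 * x * hD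
  · push_cast
    linear_combination g₂ * hs₁ - g₁ * hs₂ - 2 * d₁ * hg₂ + 2 * d₂ * hg₁ + 4 * y * hD

end LatticeWeights

section AffineIndependence

theorem affineIndependent_of_unique_pos_weights {ι E : Type*} [Fintype ι] [AddCommGroup E]
    [Module ℝ E] {p : ι → E} {w : ι → ℝ} (hw : ∀ j, 0 < w j)
    (hunique : ∀ w' : ι → ℝ, (∀ j, 0 < w' j) → ∑ j, w' j = ∑ j, w j →
      ∑ j, w' j • p j = ∑ j, w j • p j → w' = w) :
    AffineIndependent ℝ p := by
  rw [affineIndependent_iff_of_fintype]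
  intro v hv hvp j
  rw [Finset.univ.weightedVSub_eq_linear_combination hv] at hvp
  have hpos : ∀ᶠ t : ℝ in 𝓝[>] 0, ∀ j, 0 < w j + t * v j := by
    refine Filter.eventually_all.mpr fun j => Filter.Eventually.filter_mono nhdsWithin_le_nhds ?_
    have hcont : Continuous fun t : ℝ => w j + t * v j := by fun_prop
    exact hcont.continuousAt.eventually_const_lt (by simpa using hw j)
  obtain ⟨t, htw, ht⟩ := (hpos.and self_mem_nhdsWithin).exists
  have hperturbed : (fun j => w j + t * v j) = w :=
    hunique _ htw (by simp [Finset.sum_add_distrib, ← Finset.mul_sum, hv])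
      (by simp [add_smul, mul_smul, Finset.sum_add_distrib, ← Finset.smul_sum, hvp])
  have ht_pos : 0 < t := ht
  simpa [ht_pos.ne'] using congrFun hperturbed j

theorem exists_affineMap_apply_eq_of_affineIndependent {k V W ι : Type*} [Field k]
    [AddCommGroup V] [Module k V] [AddCommGroup W] [Module k W] {p : ι → V}
    (hp : AffineIndependent k p) (v : ι → W) : ∃ f : V →ᵃ[k] W, ∀ j, f (p j) = v j := by
  rcases isEmpty_or_nonempty ι with _ | ⟨⟨j₀⟩⟩
  · exact ⟨0, isEmptyElim⟩
  have hlin := (affineIndependent_iff_linearIndependent_vsub k p j₀).mp hp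
  let basis := Module.Basis.span hlin
  obtain ⟨g, hg⟩ := LinearMap.exists_extend (basis.constr k fun j => v j - v j₀)
  have hgp (j : ι) (hj : j ≠ j₀) : g (p j - p j₀) = v j - v j₀ := by
    have h := LinearMap.congr_fun hg (basis ⟨j, hj⟩)
    rwa [Module.Basis.constr_basis, LinearMap.comp_apply, Submodule.subtype_apply,
      Module.Basis.span_apply] at h
  refine ⟨g.toAffineMap + AffineMap.const k V (v j₀ - g (p j₀)), fun j => ?_⟩
  rcases eq_or_ne j j₀ with rfl | hj
  · simp
  · have h := hgp j hj
    rw [map_sub] at h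
    simp [sub_eq_iff_eq_add.mp h]

theorem exists_minor_ne_zero_of_affineIndependent {k σ : Type*} [Field k] {p : Fin 3 → σ → k}
    (hp : AffineIndependent k p) :
    ∃ i l, (p 1 i - p 0 i) * (p 2 l - p 0 l) - (p 1 l - p 0 l) * (p 2 i - p 0 i) ≠ 0 := by
  by_contra! hminor
  have hindep (s t : k) (hst : ∀ i, s * (p 1 i - p 0 i) + t * (p 2 i - p 0 i) = 0) :
      s = 0 ∧ t = 0 := by
    have hsum : ∑ j, ![-s - t, s, t] j = 0 := by
      rw [Fin.sum_univ_three]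
      change -s - t + s + t = 0
      ring
    have hcomb : ∑ j, ![-s - t, s, t] j • p j = 0 := by
      ext i
      rw [Fin.sum_univ_three]
      change (-s - t) * p 0 i + s * p 1 i + t * p 2 i = 0
      linear_combination hst i
    have h := (affineIndependent_iff_of_fintype k p).mp hp _ hsum
      (by rw [Finset.univ.weightedVSub_eq_linear_combination hsum, hcomb])
    exact ⟨h 1, h 2⟩
  have hzero (i : σ) : p 1 i - p 0 i = 0 :=
    neg_eq_zero.mp (hindep (p 2 i - p 0 i) (-(p 1 i - p 0 i)) fun l => by
      linear_combination -hminor i l).2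
  exact one_ne_zero (hindep 1 0 fun i => by simp [hzero i]).1

end AffineIndependence

/-- An even circuit: affinely independent even exponents and an exponent `inner` in the relative
interior of their convex hull. The even exponents are `2 • half j`, recorded through their halves;
`weight` holds the barycentric coordinates of `inner`. -/
structure EvenCircuit (ι σ : Type*) [Fintype ι] where
  half : ι → σ →₀ ℕ
  inner : σ →₀ ℕ
  weight : ι → ℝ
  affineIndependent : AffineIndependent ℝ fun j i => (half j i : ℝ)
  weight_pos : ∀ j, 0 < weight j
  sum_weight : ∑ j, weight j = 1
  inner_eq : ∀ i, (inner i : ℝ) = 2 * ∑ j, weight j * half j i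

namespace EvenCircuit

variable {ι σ : Type*} [Fintype ι] (K : EvenCircuit ι σ)

/-- The circuit polynomial supported on `K`, with outer coefficients `b` and inner coefficient
`c`. -/
noncomputable def poly (b : ι → ℝ) (c : ℝ) : MvPolynomial σ ℝ :=
  ∑ j, monomial (2 • K.half j) (b j) + monomial K.inner c

theorem weight_eq_of_inner_eq {w : ι → ℝ} (hsum : ∑ j, w j = 1)
    (hinner : ∀ i, (K.inner i : ℝ) = 2 * ∑ j, w j * K.half j i) : w = K.weight := by
  refine (affineIndependent_iff_eq_of_fintype_affineCombination_eq ℝ _).mp K.affineIndependent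
    w K.weight hsum K.sum_weight ?_
  rw [Finset.univ.affineCombination_eq_linear_combination _ _ hsum,
    Finset.univ.affineCombination_eq_linear_combination _ _ K.sum_weight]
  ext i
  simpa [K.inner_eq] using (hinner i).symm

theorem inner_ne_two_nsmul_half [Nontrivial ι] (j : ι) : K.inner ≠ 2 • K.half j := by
  classical
  intro hinner
  have hvertex : Pi.single j 1 = K.weight :=
    K.weight_eq_of_inner_eq (by simp) fun i => by simp [hinner, Pi.single_apply]
  obtain ⟨l, hl⟩ := exists_ne j
  exact (K.weight_pos l).ne (by simp [← hvertex, hl])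

theorem half_injective : Function.Injective K.half := fun j l hjl =>
  K.affineIndependent.injective (by simp only [hjl])

theorem two_nsmul_half_mem_support [Nontrivial ι] {b : ι → ℝ} {j : ι} (hb : b j ≠ 0) (c : ℝ) :
    2 • K.half j ∈ (K.poly b c).support := by
  classical
  have hother (l : ι) : 2 • K.half l = 2 • K.half j ↔ l = j :=
    (nsmul_right_injective two_ne_zero).eq_iff.trans K.half_injective.eq_iff
  simp [poly, coeff_sum, coeff_monomial, hother, K.inner_ne_two_nsmul_half, hb]

/-- The circuit polynomial on `K` whose outer coefficients are the barycentric weights and whose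
inner coefficient is `e`, in variables rescaled by `z`. For `e = -1` and `z = 1` it is Reznick's
agiform, the difference of the two sides of a weighted arithmetic-geometric mean inequality. -/
noncomputable def agiform (z : σ → ℝ) (e : ℝ) : MvPolynomial σ ℝ :=
  ∑ j, K.weight j • normalizedMonomial z (2 • K.half j) + e • normalizedMonomial z K.inner

theorem exists_pos_point_eval_eq_mul_weight [Finite σ] {b : ι → ℝ} (hb : ∀ j, 0 < b j) :
    ∃ (z : σ → ℝ) (B : ℝ), (∀ i, 0 < z i) ∧ 0 < B ∧
      ∀ j, eval z (monomial (2 • K.half j) (b j)) = B * K.weight j := by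
  classical
  have := Fintype.ofFinite σ
  -- After taking logarithms, the equations prescribe an affine function on the outer exponents.
  obtain ⟨f, hf⟩ := exists_affineMap_apply_eq_of_affineIndependent K.affineIndependent
    fun j => Real.log (K.weight j / b j)
  let L : (σ → ℝ) →ₗ[ℝ] ℝ := f.linear
  refine ⟨fun i => Real.exp (L (Pi.single i 1) / 2), Real.exp (-f 0), fun _ => Real.exp_pos _,
    Real.exp_pos _, fun j => ?_⟩
  have hL : L (fun i => (K.half j i : ℝ)) = Real.log (K.weight j / b j) - f 0 := by
    rw [← hf j, f.decomp']
    simp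
  have hpow : ∏ i, Real.exp (L (Pi.single i 1) / 2) ^ (2 * K.half j i) =
      Real.exp (L fun i => (K.half j i : ℝ)) := by
    rw [pi_eq_sum_univ' fun i => (K.half j i : ℝ), map_sum, Real.exp_sum]
    refine Finset.prod_congr rfl fun i _ => ?_
    rw [← Real.exp_nat_mul, map_smul, smul_eq_mul]
    push_cast
    ring_nf
  rw [eval_monomial, Finsupp.prod_fintype _ _ fun _ => pow_zero _]
  simp only [Finsupp.smul_apply, smul_eq_mul]
  rw [hpow, hL, sub_eq_add_neg, Real.exp_add, Real.exp_log (div_pos (K.weight_pos j) (hb j))]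
  field_simp [(hb j).ne']

theorem exists_poly_eq_smul_agiform [Finite σ] {b : ι → ℝ} (hb : ∀ j, 0 < b j) (c : ℝ) :
    ∃ (z : σ → ℝ) (B e : ℝ), (∀ i, z i ≠ 0) ∧ 0 < B ∧ K.poly b c = B • K.agiform z e := by
  obtain ⟨z, B, hz, hB, hbz⟩ := K.exists_pos_point_eval_eq_mul_weight hb
  have hz0 (i : σ) : z i ≠ 0 := (hz i).ne'
  refine ⟨z, B, eval z (monomial K.inner c) / B, hz0, hB, ?_⟩
  rw [poly, agiform, smul_add, Finset.smul_sum, smul_smul, mul_div_cancel₀ _ hB.ne',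
    ← monomial_eq_smul_normalizedMonomial hz0]
  simp only [smul_smul, ← hbz, ← monomial_eq_smul_normalizedMonomial hz0]

theorem eval_agiform_of_sign {z : σ → ℝ} (hz : ∀ i, z i ≠ 0) (e : ℝ) {ε : σ → ℝ}
    (hε : ∀ i, ε i * ε i = 1) :
    eval (ε * z) (K.agiform z e) = 1 + e * eval ε (monomial K.inner 1) := by
  simp only [agiform, map_add, map_sum, smul_eval, eval_mul_normalizedMonomial hz,
    eval_monomial_two_nsmul_of_mul_self_eq_one hε, mul_one, K.sum_weight]

theorem isSumSq_agiform_of_even (z : σ → ℝ) {e : ℝ} (he : 0 ≤ e)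
    (heven : ∀ i, Even (K.inner i)) : IsSumSq (K.agiform z e) := by
  have hsq (d : σ →₀ ℕ) : IsSumSq (normalizedMonomial z (2 • d)) :=
    normalizedMonomial_two_nsmul z d ▸ IsSumSq.mul_self _
  obtain ⟨d, hd⟩ := exists_eq_two_nsmul_of_even heven
  rw [agiform, hd]
  exact (IsSumSq.sum fun j _ => isSumSq_smul (K.weight_pos j).le (hsq _)).add
    (isSumSq_smul he (hsq d))

section QuarterWeights

variable [DecidableEq ι] {i j k : ι}

theorem exists_inner_eq_add_of_weight_eq
    (hw : K.weight = Pi.single i (1 / 4) + Pi.single j (1 / 4) + Pi.single k (1 / 2)) :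
    ∃ m, K.inner = m + K.half k ∧ 2 • m = K.half i + K.half j := by
  have hinner : 2 • K.inner = K.half i + K.half j + 2 • K.half k := by
    ext l
    have h := K.inner_eq l
    simp only [hw, Pi.add_apply, add_mul, Finset.sum_add_distrib, Pi.single_apply, ite_mul,
      zero_mul, Finset.sum_ite_eq', Finset.mem_univ, if_true] at h
    simp only [Finsupp.add_apply, Finsupp.smul_apply, smul_eq_mul]
    rify
    linarith
  have hle : K.half k ≤ K.inner := fun l => by
    have h := DFunLike.congr_fun hinner l
    simp only [Finsupp.add_apply, Finsupp.smul_apply, smul_eq_mul] at h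
    lia
  obtain ⟨m, hm⟩ := exists_add_of_le hle
  refine ⟨m, hm.trans (add_comm _ _), ?_⟩
  rw [hm, smul_add, add_comm] at hinner
  exact add_right_cancel hinner

theorem isSumSq_agiform_of_weight_eq (z : σ → ℝ) {e : ℝ} (he : e ^ 2 ≤ 1)
    (hw : K.weight = Pi.single i (1 / 4) + Pi.single j (1 / 4) + Pi.single k (1 / 2)) :
    IsSumSq (K.agiform z e) := by
  obtain ⟨m, hinner, hm⟩ := K.exists_inner_eq_add_of_weight_eq hw
  let X (d : σ →₀ ℕ) := normalizedMonomial z d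
  have hmid : X m * X m = X (K.half i) * X (K.half j) := by
    simp only [X, ← normalizedMonomial_add, ← hm, two_nsmul]
  have hform : K.agiform z e =
      (1 / 4 : ℝ) • (X (K.half i) * X (K.half i)) + (1 / 4 : ℝ) • (X (K.half j) * X (K.half j)) +
        (1 / 2 : ℝ) • (X (K.half k) * X (K.half k)) + e • (X m * X (K.half k)) := by
    simp only [agiform, hw, hinner, normalizedMonomial_two_nsmul, normalizedMonomial_add,
      Pi.add_apply, add_smul, Finset.sum_add_distrib, Pi.single_apply, ite_smul, zero_smul,
      Finset.sum_ite_eq', Finset.mem_univ, if_true, X]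
  exact hform ▸ isSumSq_quarter_form he hmid _

end QuarterWeights

theorem isSumSq_poly_of_weight_eq [Finite σ] [DecidableEq ι] {i j k : ι} {b : ι → ℝ} {c : ℝ}
    (hb : ∀ j, 0 < b j) (hpos : ∀ x, 0 ≤ eval x (K.poly b c))
    (hw : K.weight = Pi.single i (1 / 4) + Pi.single j (1 / 4) + Pi.single k (1 / 2)) :
    IsSumSq (K.poly b c) := by
  obtain ⟨z, B, e, hz, hB, hpoly⟩ := K.exists_poly_eq_smul_agiform hb c
  rw [hpoly]
  refine isSumSq_smul hB.le ?_
  have hsign (ε : σ → ℝ) (hε : ∀ i, ε i * ε i = 1) :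
      0 ≤ 1 + e * eval ε (monomial K.inner 1) := by
    have h := hpos (ε * z)
    rw [hpoly, smul_eval, K.eval_agiform_of_sign hz e hε] at h
    exact nonneg_of_mul_nonneg_right h hB
  rcases sq_le_one_or_even_of_forall_sign hsign with he | ⟨he, heven⟩
  · exact K.isSumSq_agiform_of_weight_eq z he hw
  · exact K.isSumSq_agiform_of_even z he heven

theorem exists_int_four_mul_weight_of_segment (K : EvenCircuit (Fin 2) σ)
    (hdeg : ∀ j, (K.half j).degree ≤ 2) (j : Fin 2) : ∃ m : ℤ, 4 * K.weight j = m := by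
  obtain ⟨i, hi⟩ : ∃ i, K.half 0 i ≠ K.half 1 i :=
    DFunLike.ne_iff.mp (K.half_injective.ne zero_ne_one)
  have hle (j : Fin 2) : K.half j i ≤ 2 := ((K.half j).le_degree i).trans (hdeg j)
  have hsum := K.sum_weight
  have hinner := K.inner_eq i
  rw [Fin.sum_univ_two] at hsum hinner
  obtain ⟨s, hs⟩ : (K.half 1 i - K.half 0 i : ℤ) ∣ 2 := by
    have h0 := hle 0
    have h1 := hle 1
    interval_cases K.half 0 i <;> interval_cases K.half 1 i <;> simp_all
  rify at hs
  have hone : 4 * K.weight 1 = ((K.inner i - 2 * K.half 0 i) * s : ℤ) := by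
    push_cast
    linear_combination (2 * K.weight 1) * hs - s * hinner - (2 * s * K.half 0 i) * hsum
  fin_cases j
  · exact ⟨4 - (K.inner i - 2 * K.half 0 i) * s, by
      push_cast at hone ⊢
      linear_combination 4 * hsum - hone⟩
  · exact ⟨_, hone⟩

theorem exists_int_four_mul_weight_of_triangle (K : EvenCircuit (Fin 3) σ)
    (hdeg : ∀ j, (K.half j).degree ≤ 2) (j : Fin 3) : ∃ m : ℤ, 4 * K.weight j = m := by
  classical
  obtain ⟨i, l, hminor⟩ := exists_minor_ne_zero_of_affineIndependent K.affineIndependent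
  have hil : i ≠ l := by
    rintro rfl
    exact hminor (by ring)
  have hle (j : Fin 3) : K.half j i + K.half j l ≤ 2 := by
    refine le_trans ?_ (hdeg j)
    rw [← Finset.sum_pair hil]
    exact Finset.sum_le_sum_of_ne_zero fun _ _ => Finsupp.mem_support_iff.mpr
  have hD : ((K.half 1 i - K.half 0 i) * (K.half 2 l - K.half 0 l) -
      (K.half 1 l - K.half 0 l) * (K.half 2 i - K.half 0 i) : ℤ) ≠ 0 := by
    exact_mod_cast hminor
  obtain ⟨hdvd₁, hdvd₂⟩ := det_dvd_two_mul_sub (hle 0) (hle 1) (hle 2) rfl hD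
  have hsum := K.sum_weight
  rw [Fin.sum_univ_three] at hsum
  have hinner (x : σ) : ((K.inner x - 2 * K.half 0 x : ℤ) : ℝ) =
      2 * (K.weight 1 * (K.half 1 x - K.half 0 x : ℤ) +
        K.weight 2 * (K.half 2 x - K.half 0 x : ℤ)) := by
    push_cast
    rw [K.inner_eq x, Fin.sum_univ_three]
    linear_combination (2 * K.half 0 x) * hsum
  obtain ⟨⟨m₁, hm₁⟩, m₂, hm₂⟩ :=
    exists_int_eq_four_mul_of_det_dvd rfl hD hdvd₁ hdvd₂ (hinner i) (hinner l)
  fin_cases j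
  · refine ⟨4 - m₁ - m₂, ?_⟩
    push_cast
    rw [← hm₁, ← hm₂]
    change 4 * K.weight 0 = 4 - 4 * K.weight 1 - 4 * K.weight 2
    linear_combination 4 * hsum
  · exact ⟨m₁, hm₁⟩
  · exact ⟨m₂, hm₂⟩

theorem inner_eq_two_nsmul_half [Subsingleton ι] (j : ι) : K.inner = 2 • K.half j := by
  ext i
  have hweight := K.sum_weight
  have hinner := K.inner_eq i
  rw [Fintype.sum_subsingleton _ j] at hweight hinner
  rw [hweight, one_mul] at hinner
  exact_mod_cast hinner

theorem isSumSq_poly_of_subsingleton [Subsingleton ι] {b : ι → ℝ} {c : ℝ}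
    (hpos : ∀ x, 0 ≤ eval x (K.poly b c)) : IsSumSq (K.poly b c) := by
  obtain ⟨j, -⟩ : ∃ j ∈ Finset.univ, K.weight j ≠ 0 :=
    Finset.exists_ne_zero_of_sum_ne_zero (K.sum_weight.trans_ne one_ne_zero)
  have hpoly : K.poly b c = monomial (2 • K.half j) (b j + c) := by
    rw [poly, Fintype.sum_subsingleton _ j, K.inner_eq_two_nsmul_half j, map_add]
  have hcoeff := hpos 1
  rw [hpoly] at hcoeff ⊢
  exact isSumSq_monomial_two_nsmul (by simpa [eval_monomial] using hcoeff) _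

theorem degree_half_le [Nontrivial ι] {b : ι → ℝ} (hb : ∀ j, b j ≠ 0) {c : ℝ} {d : ℕ}
    (hdeg : (K.poly b c).totalDegree ≤ 2 * d) (j : ι) : (K.half j).degree ≤ d := by
  have h : (2 • K.half j).degree ≤ 2 * d :=
    (le_totalDegree (K.two_nsmul_half_mem_support (hb j) c)).trans hdeg
  rw [map_nsmul, smul_eq_mul] at h
  lia

theorem isSumSq_poly_of_totalDegree_le_four [Finite σ] {r : ℕ} (hr : r ≤ 2)
    (K : EvenCircuit (Fin (r + 1)) σ) {b : Fin (r + 1) → ℝ} {c : ℝ} (hb : ∀ j, 0 < b j)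
    (hpos : ∀ x, 0 ≤ eval x (K.poly b c)) (hdeg : (K.poly b c).totalDegree ≤ 4) :
    IsSumSq (K.poly b c) := by
  rcases subsingleton_or_nontrivial (Fin (r + 1)) with _ | hnontrivial
  · exact K.isSumSq_poly_of_subsingleton hpos
  have hr0 : 2 ≤ r + 1 := Fin.nontrivial_iff_two_le.mp hnontrivial
  have hhalf := K.degree_half_le (d := 2) (fun j => (hb j).ne') hdeg
  have hint : ∀ j, ∃ m : ℤ, 4 * K.weight j = m := by
    obtain rfl | rfl : r = 1 ∨ r = 2 := by lia
    · exact K.exists_int_four_mul_weight_of_segment hhalf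
    · exact K.exists_int_four_mul_weight_of_triangle hhalf
  obtain ⟨i, j, k, hw⟩ := exists_eq_quarter_single_add (by rw [Fintype.card_fin]; lia)
    (fun j => (K.weight_pos j).le) K.sum_weight hint
  exact K.isSumSq_poly_of_weight_eq hb hpos hw

end EvenCircuit

theorem IsCircuitPoly.exists_evenCircuit {n : ℕ} {p : MvPolynomial (Fin n) ℝ}
    (hp : IsCircuitPoly p) : ∃ r ≤ n, ∃ (K : EvenCircuit (Fin (r + 1)) (Fin n))
      (b : Fin (r + 1) → ℝ) (c : ℝ), (∀ j, 0 < b j) ∧ p = K.poly b c := by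
  obtain ⟨r, hr, α, β, b, c, w, hb, heven, hw, hsum, hβ, hunique, rfl⟩ := hp
  choose a ha using fun j => exists_eq_two_nsmul_of_even (heven j)
  have hbary (v : Fin (r + 1) → ℝ) (i : Fin n) :
      ∑ j, v j * (α j i : ℝ) = 2 * ∑ j, v j * (a j i : ℝ) := by
    rw [Finset.mul_sum]
    refine Finset.sum_congr rfl fun j _ => ?_
    rw [ha j, Finsupp.smul_apply, smul_eq_mul]
    push_cast
    ring
  have hindep : AffineIndependent ℝ fun j i => (a j i : ℝ) := by
    refine affineIndependent_of_unique_pos_weights hw fun v hv hvsum hva => ?_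
    refine hunique v hv (hvsum.trans hsum) fun i => ?_
    have hvi := congrFun hva i
    simp only [Finset.sum_apply, Pi.smul_apply, smul_eq_mul] at hvi
    rw [hβ, hbary, hbary, hvi]
  refine ⟨r, hr, ⟨a, β, w, hindep, hw, hsum, fun i => (hβ i).trans (hbary w i)⟩, b, c, hb, ?_⟩
  simp only [EvenCircuit.poly, ha]

theorem IsCircuitPoly.isSumSq_of_totalDegree_le_four {n : ℕ} (hn : n ≤ 2)
    {p : MvPolynomial (Fin n) ℝ} (hp : IsCircuitPoly p) (hpos : ∀ x, 0 ≤ eval x p)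
    (hdeg : p.totalDegree ≤ 4) : IsSumSq p := by
  obtain ⟨r, hr, K, b, c, hb, rfl⟩ := hp.exists_evenCircuit
  exact K.isSumSq_poly_of_totalDegree_le_four (hr.trans hn) hb hpos hdeg

theorem SONCCone_subset_SOSCone_two_four_general {n : ℕ} (hn : n ≤ 2) :
    SONCCone n 2 ⊆ SOSCone n 2 := by
  rintro p ⟨hdeg, k, q, hq, rfl⟩
  have hle (m : Fin k) (x : Fin n → ℝ) : eval x (q m) ≤ eval x (∑ m, q m) := by
    rw [map_sum]
    exact Finset.single_le_sum (fun l _ => (hq l).2 x) (Finset.mem_univ m)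
  have hsos (m : Fin k) : IsSumSq (q m) :=
    (hq m).1.isSumSq_of_totalDegree_le_four hn (hq m).2
      ((totalDegree_le_of_eval_nonneg_of_eval_le (hq m).2 (hle m)).trans hdeg)
  exact ⟨hdeg, exists_fin_sum_sq_of_isSumSq (IsSumSq.sum fun m _ => hsos m)⟩

/-- `C_{2,4} ⊆ Σ_{2,4}`: every bivariate polynomial of degree
at most `4` that is a sum of nonnegative circuit polynomials is a sum of
squares of polynomials. -/
theorem SONCCone_subset_SOSCone_two_four :
    SONCCone 2 2 ⊆ SOSCone 2 2 :=
  SONCCone_subset_SOSCone_two_four_general le_rfl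
end

section
/- If n ≥ 2, 2d ≥ 4 and (n,2d) ≠ (2,4), then C_{n,2d} ⊄ Σ_{n,2d}: there exists an n-variate polynomial of degree at most 2d that is a sum of nonnegative circuit polynomials but is not a sum of squares of polynomials. -/
open MvPolynomial

/-!
If `a` is an extreme point of the convex hull of all exponents occurring in the `s i`, then `2a`
decomposes as a sum of two of these exponents only as `a + a`, so its coefficient in `∑ s i ^ 2` is
a sum of squares, not all zero. By Krein–Milman the exponents of every `s i` therefore lie in half
the Newton polytope of `∑ s i ^ 2` (Reznick). Hence, if `β` is not a sum of two distinct lattice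
points of this half polytope, the coefficient of `x ^ β` in a sum of squares is nonnegative.

The Motzkin polynomial (`n = 2`, `2d ≥ 6`) and the Choi–Lam polynomial (`n ≥ 3`, `2d ≥ 4`) violate
this: they are instances of the arithmetic-geometric mean inequality supported on a simplex, hence
nonnegative circuit polynomials, with such a `β` as inner exponent and a negative coefficient at it.
-/

section NewtonPolytope

open Set

open scoped Pointwise

variable {σ R ι : Type*}

/-- The point of `ℝ^σ` with the coordinates of an exponent vector; Newton polytopes are taken
in `ℝ^σ`. -/
noncomputable def exponentPoint : (σ →₀ ℕ) →+ (σ → ℝ) :=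
  ((Nat.castAddMonoidHom ℝ).compLeft σ).comp Finsupp.coeFnAddHom

@[simp]
theorem exponentPoint_apply (a : σ →₀ ℕ) (l : σ) : exponentPoint a l = a l := rfl

theorem exponentPoint_injective : Function.Injective (exponentPoint (σ := σ)) := fun a b h =>
  Finsupp.ext fun l => Nat.cast_injective (congrFun h l : (a l : ℝ) = b l)

/-- The Newton polytope of a polynomial: the convex hull of the exponents of its monomials. -/
noncomputable def newtonPolytope [CommSemiring R] (p : MvPolynomial σ R) : Set (σ → ℝ) :=
  convexHull ℝ (exponentPoint '' p.support)

theorem exponentPoint_mem_newtonPolytope [CommSemiring R] {p : MvPolynomial σ R} {a : σ →₀ ℕ}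
    (ha : a ∈ p.support) : exponentPoint a ∈ newtonPolytope p :=
  subset_convexHull ℝ _ (mem_image_of_mem _ ha)

theorem uniqueAdd_of_mem_extremePoints {A : Finset (σ →₀ ℕ)} {a : σ →₀ ℕ}
    (ha : exponentPoint a ∈ (convexHull ℝ (exponentPoint '' (A : Set (σ →₀ ℕ)))).extremePoints ℝ) :
    UniqueAdd A A a a := by
  intro b c hb hc hbc
  have hmem {e : σ →₀ ℕ} (he : e ∈ A) :
      exponentPoint e ∈ convexHull ℝ (exponentPoint '' (A : Set (σ →₀ ℕ))) :=
    subset_convexHull ℝ _ (mem_image_of_mem _ he)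
  have hmid : exponentPoint a ∈ openSegment ℝ (exponentPoint b) (exponentPoint c) := by
    refine ⟨1 / 2, 1 / 2, by norm_num, by norm_num, by norm_num, ?_⟩
    rw [← smul_add, ← map_add, hbc, map_add, ← two_smul ℝ, smul_smul]
    norm_num
  have hb_eq := exponentPoint_injective
    ((mem_extremePoints_iff_left.mp ha).2 _ (hmem hb) _ (hmem hc) hmid)
  exact ⟨hb_eq, add_left_cancel (hb_eq ▸ hbc)⟩

variable [CommRing R] [LinearOrder R] [IsStrictOrderedRing R]

theorem coeff_sq_nonneg {p : MvPolynomial σ R} {β : σ →₀ ℕ}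
    (hβ : ∀ a ∈ p.support, ∀ b ∈ p.support, a + b = β → a = b) : 0 ≤ coeff β (p ^ 2) := by
  classical
  rw [pow_two, coeff_mul]
  refine Finset.sum_nonneg fun ⟨a, b⟩ hab => ?_
  by_cases hsupp : a ∈ p.support ∧ b ∈ p.support
  · obtain rfl := hβ a hsupp.1 b hsupp.2 (Finset.HasAntidiagonal.mem_antidiagonal.mp hab)
    exact mul_self_nonneg _
  · rw [not_and_or, notMem_support_iff, notMem_support_iff] at hsupp
    exact (mul_eq_zero.mpr hsupp).ge

theorem add_self_mem_support_sum_sq {t : Finset ι} {s : ι → MvPolynomial σ R} {A : Finset (σ →₀ ℕ)}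
    (hA : ∀ i ∈ t, (s i).support ⊆ A) {a : σ →₀ ℕ} (ha : UniqueAdd A A a a)
    (hat : ∃ i ∈ t, a ∈ (s i).support) : a + a ∈ (∑ i ∈ t, s i ^ 2).support := by
  obtain ⟨i, hi, hai⟩ := hat
  have hcoeff : ∀ k ∈ t, coeff (a + a) (s k ^ 2) = coeff a (s k) ^ 2 := fun k hk => by
    rw [pow_two, pow_two]
    exact AddMonoidAlgebra.coeff_mul_add_of_uniqueAdd (ha.mono (hA k hk) (hA k hk))
  rw [mem_support_iff, coeff_sum, Finset.sum_congr rfl hcoeff]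
  exact (Finset.sum_pos' (fun k _ => sq_nonneg (coeff a (s k)))
    ⟨i, hi, pow_two_pos_of_ne_zero (mem_support_iff.mp hai)⟩).ne'

theorem newtonPolytope_subset_of_sum_sq {t : Finset ι} (s : ι → MvPolynomial σ R) {i : ι}
    (hi : i ∈ t) : newtonPolytope (s i) ⊆ (2⁻¹ : ℝ) • newtonPolytope (∑ k ∈ t, s k ^ 2) := by
  classical
  set A : Finset (σ →₀ ℕ) := t.biUnion fun k => (s k).support
  set K : Set (σ → ℝ) := convexHull ℝ (exponentPoint '' (A : Set (σ →₀ ℕ)))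
  have hA : ∀ k ∈ t, (s k).support ⊆ A := fun k hk =>
    Finset.subset_biUnion_of_mem (fun k => (s k).support) hk
  have hfin : (exponentPoint '' (A : Set (σ →₀ ℕ))).Finite := A.finite_toSet.image _
  have hext : K.extremePoints ℝ ⊆ (2⁻¹ : ℝ) • newtonPolytope (∑ k ∈ t, s k ^ 2) := by
    intro x hx
    obtain ⟨a, haA, rfl⟩ := extremePoints_convexHull_subset hx
    have hmem := add_self_mem_support_sum_sq hA (uniqueAdd_of_mem_extremePoints hx)
      (Finset.mem_biUnion.mp haA)
    rw [mem_inv_smul_set_iff₀ (two_ne_zero' ℝ), two_smul, ← map_add]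
    exact exponentPoint_mem_newtonPolytope hmem
  have hKreinMilman : K = convexHull ℝ (K.extremePoints ℝ) := by
    have hclosed : IsClosed (convexHull ℝ (K.extremePoints ℝ)) :=
      (hfin.subset extremePoints_convexHull_subset).isClosed_convexHull ℝ
    rw [← hclosed.closure_eq,
      closure_convexHull_extremePoints (hfin.isCompact_convexHull ℝ) (convex_convexHull ℝ _)]
  calc newtonPolytope (s i) ⊆ K := convexHull_mono (image_mono (Finset.coe_subset.mpr (hA i hi)))
    _ = convexHull ℝ (K.extremePoints ℝ) := hKreinMilman
    _ ⊆ (2⁻¹ : ℝ) • newtonPolytope (∑ k ∈ t, s k ^ 2) :=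
      convexHull_min hext ((convex_convexHull ℝ _).smul _)

theorem coeff_sum_sq_nonneg {t : Finset ι} {s : ι → MvPolynomial σ R} {β : σ →₀ ℕ}
    (hβ : ∀ a b : σ →₀ ℕ, exponentPoint (a + a) ∈ newtonPolytope (∑ i ∈ t, s i ^ 2) →
      exponentPoint (b + b) ∈ newtonPolytope (∑ i ∈ t, s i ^ 2) → a + b = β → a = b) :
    0 ≤ coeff β (∑ i ∈ t, s i ^ 2) := by
  have hdouble {i : ι} (hi : i ∈ t) {a : σ →₀ ℕ} (ha : a ∈ (s i).support) :
      exponentPoint (a + a) ∈ newtonPolytope (∑ i ∈ t, s i ^ 2) := by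
    rw [map_add, ← two_smul ℝ, ← mem_inv_smul_set_iff₀ (two_ne_zero' ℝ)]
    exact newtonPolytope_subset_of_sum_sq s hi (exponentPoint_mem_newtonPolytope ha)
  rw [coeff_sum]
  exact Finset.sum_nonneg fun i hi => coeff_sq_nonneg fun a ha b hb =>
    hβ a b (hdouble hi ha) (hdouble hi hb)

end NewtonPolytope

section ExponentHull

variable {σ ι : Type*} {α : ι → σ →₀ ℕ}

/-- The convex hull of a family of exponents, seen as points of `ℝ^σ`. -/
noncomputable def exponentHull (α : ι → σ →₀ ℕ) : Set (σ → ℝ) :=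
  convexHull ℝ (Set.range fun j => exponentPoint (α j))

theorem exponentPoint_mem_exponentHull (j : ι) : exponentPoint (α j) ∈ exponentHull α :=
  subset_convexHull ℝ _ (Set.mem_range_self j)

theorem le_of_mem_exponentHull (f : (σ → ℝ) →ₗ[ℝ] ℝ) {c : ℝ}
    (hα : ∀ j, f (exponentPoint (α j)) ≤ c) {x : σ → ℝ} (hx : x ∈ exponentHull α) : f x ≤ c :=
  convexHull_min (Set.range_subset_iff.mpr hα) (convex_halfSpace_le f.isLinear c) hx

end ExponentHull

section Agiform

variable {σ ι : Type*} [Fintype ι] {α : ι → σ →₀ ℕ} {β : σ →₀ ℕ} {w : ι → ℝ}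

/-- Reznick's agiform `∑ j, w j * x ^ α j - x ^ β`, with the exponents as data. For even `α j` and
`β` the barycentre of the `α j` with weights `w j`, its nonnegativity is the
arithmetic-geometric mean inequality. -/
noncomputable def agiform (α : ι → σ →₀ ℕ) (w : ι → ℝ) (β : σ →₀ ℕ) : MvPolynomial σ ℝ :=
  ∑ j, monomial (α j) (w j) - monomial β 1

theorem prod_pow_eq_prod_prod_pow_rpow [Fintype σ] (hw : ∀ j, 0 ≤ w j)
    (hβ : exponentPoint β = ∑ j, w j • exponentPoint (α j)) {y : σ → ℝ} (hy : ∀ l, 0 ≤ y l) :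
    ∏ l, y l ^ β l = ∏ j, (∏ l, y l ^ α j l) ^ w j := by
  have hcoord (l : σ) : (β l : ℝ) = ∑ j, α j l * w j := by
    simpa [mul_comm] using congrFun hβ l
  calc ∏ l, y l ^ β l = ∏ l, ∏ j, (y l ^ α j l) ^ w j := by
        refine Finset.prod_congr rfl fun l _ => ?_
        rw [← Real.rpow_natCast, hcoord,
          Real.rpow_sum_of_nonneg (hy l) fun j _ => mul_nonneg (Nat.cast_nonneg _) (hw j)]
        simp only [Real.rpow_mul (hy l), Real.rpow_natCast]
    _ = ∏ j, ∏ l, (y l ^ α j l) ^ w j := Finset.prod_comm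
    _ = ∏ j, (∏ l, y l ^ α j l) ^ w j := Finset.prod_congr rfl fun j _ =>
        Real.finsetProd_rpow _ _ (fun l _ => pow_nonneg (hy l) _) _

theorem eval_agiform_nonneg [Finite σ] (hα : ∀ j l, Even (α j l)) (hw : ∀ j, 0 ≤ w j)
    (hsum : ∑ j, w j = 1) (hβ : exponentPoint β = ∑ j, w j • exponentPoint (α j)) (x : σ → ℝ) :
    0 ≤ eval x (agiform α w β) := by
  have := Fintype.ofFinite σ
  have hamgm : ∏ l, x l ^ β l ≤ ∑ j, w j * ∏ l, x l ^ α j l :=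
    calc ∏ l, x l ^ β l ≤ ∏ l, |x l| ^ β l := by
          simpa only [Finset.abs_prod, abs_pow] using le_abs_self (∏ l, x l ^ β l)
      _ = ∏ j, (∏ l, |x l| ^ α j l) ^ w j :=
          prod_pow_eq_prod_prod_pow_rpow hw hβ fun l => abs_nonneg (x l)
      _ ≤ ∑ j, w j * ∏ l, |x l| ^ α j l :=
          Real.geom_mean_le_arith_mean_weighted _ _ _ (fun j _ => hw j) hsum
            fun j _ => Finset.prod_nonneg fun l _ => pow_nonneg (abs_nonneg _) _
      _ = ∑ j, w j * ∏ l, x l ^ α j l := by simp only [(hα _ _).pow_abs]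
  simpa [agiform, eval_monomial, Finsupp.prod_fintype] using hamgm

theorem totalDegree_agiform_le {D : ℕ} (hα : ∀ j, (α j).degree ≤ D) (hβ : β.degree ≤ D) :
    (agiform α w β).totalDegree ≤ D :=
  (totalDegree_sub _ _).trans <| max_le
    (totalDegree_finsetSum_le fun j _ => (totalDegree_monomial_le _ _).trans (hα j))
    ((totalDegree_monomial_le _ _).trans hβ)

theorem newtonPolytope_agiform_subset (hw : ∀ j, 0 ≤ w j) (hsum : ∑ j, w j = 1)
    (hβ : exponentPoint β = ∑ j, w j • exponentPoint (α j)) :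
    newtonPolytope (agiform α w β) ⊆ exponentHull α := by
  classical
  refine convexHull_min (Set.image_subset_iff.mpr fun a ha => ?_) (convex_convexHull ℝ _)
  rcases Finset.mem_union.mp (support_sub _ _ _ ha) with ha | ha
  · obtain ⟨j, -, hj⟩ := Finset.mem_biUnion.mp (support_sum ha)
    obtain rfl := Finset.mem_singleton.mp (support_monomial_subset hj)
    exact exponentPoint_mem_exponentHull j
  · obtain rfl := Finset.mem_singleton.mp (support_monomial_subset ha)
    rw [Set.mem_preimage, hβ]
    exact (convex_convexHull ℝ _).sum_mem (fun j _ => hw j) hsum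
      fun j _ => exponentPoint_mem_exponentHull j

theorem agiform_ne_sum_sq {κ : Type*} (hw : ∀ j, 0 ≤ w j) (hsum : ∑ j, w j = 1)
    (hβ : exponentPoint β = ∑ j, w j • exponentPoint (α j)) (hne : ∀ j, α j ≠ β)
    (hmid : ∀ a b : σ →₀ ℕ, exponentPoint (a + a) ∈ exponentHull α →
      exponentPoint (b + b) ∈ exponentHull α → a + b = β → a = b)
    (t : Finset κ) (s : κ → MvPolynomial σ ℝ) : agiform α w β ≠ ∑ k ∈ t, s k ^ 2 := by
  classical
  intro h
  have hsub := newtonPolytope_agiform_subset hw hsum hβ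
  have hcoeff : coeff β (agiform α w β) = -1 := by
    simp [agiform, coeff_sum, coeff_monomial, hne]
  have hnonneg : 0 ≤ coeff β (agiform α w β) := by
    rw [h] at hsub ⊢
    exact coeff_sum_sq_nonneg fun a b ha hb => hmid a b (hsub ha) (hsub hb)
  linarith

end Agiform

section CircuitAgiform

variable {n r : ℕ} {α : Fin (r + 1) → Fin n →₀ ℕ} {β : Fin n →₀ ℕ} {w : Fin (r + 1) → ℝ}

theorem isCircuitPoly_agiform (hind : AffineIndependent ℝ fun j => exponentPoint (α j))
    (hα : ∀ j l, Even (α j l)) (hw : ∀ j, 0 < w j) (hsum : ∑ j, w j = 1)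
    (hβ : exponentPoint β = ∑ j, w j • exponentPoint (α j)) :
    IsCircuitPoly (agiform α w β) := by
  have hr : r ≤ n := by
    have hcard := hind.card_le_finrank_succ
    have hfinrank := Submodule.finrank_le (vectorSpan ℝ (Set.range fun j => exponentPoint (α j)))
    rw [Fintype.card_fin] at hcard
    rw [Module.finrank_fin_fun] at hfinrank
    omega
  refine ⟨r, hr, α, β, w, -1, w, hw, hα, hw, hsum,
    fun l => by simpa using congrFun hβ l, fun v _ hv hβv => ?_, by simp [agiform, sub_eq_add_neg]⟩
  refine (affineIndependent_iff_eq_of_fintype_affineCombination_eq ℝ _).mp hind v w hv hsum ?_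
  rw [Finset.univ.affineCombination_eq_linear_combination _ _ hv,
    Finset.univ.affineCombination_eq_linear_combination _ _ hsum, ← hβ]
  ext l
  simpa using (hβv l).symm

theorem agiform_mem_SONCCone {d : ℕ} (hind : AffineIndependent ℝ fun j => exponentPoint (α j))
    (hα : ∀ j l, Even (α j l)) (hw : ∀ j, 0 < w j) (hsum : ∑ j, w j = 1)
    (hβ : exponentPoint β = ∑ j, w j • exponentPoint (α j))
    (hdeg : (agiform α w β).totalDegree ≤ 2 * d) : agiform α w β ∈ SONCCone n d :=
  ⟨hdeg, 1, fun _ => agiform α w β, fun _ => ⟨isCircuitPoly_agiform hind hα hw hsum hβ,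
    eval_agiform_nonneg hα (fun j => (hw j).le) hsum hβ⟩, by simp⟩

end CircuitAgiform

theorem even_single_apply {σ : Type*} {k : ℕ} (hk : Even k) (i l : σ) :
    Even (Finsupp.single i k l) := by
  classical
  rw [Finsupp.single_apply]
  split_ifs
  exacts [hk, Even.zero]

section Motzkin

variable {σ : Type*} {i j : σ}

open Finsupp (single)

/-- The vertices `0`, `(4, 2)`, `(2, 4)` of the Newton polytope of the Motzkin polynomial, in the
coordinates `i` and `j`. -/
noncomputable def motzkinVertex (i j : σ) : Fin 3 → σ →₀ ℕ :=
  ![0, single i 4 + single j 2, single i 2 + single j 4]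

/-- One third of the Motzkin polynomial `1 + x⁴y² + x²y⁴ - 3x²y²` in the variables
`x = X i`, `y = X j`, as an agiform. -/
noncomputable def motzkin (i j : σ) : MvPolynomial σ ℝ :=
  agiform (motzkinVertex i j) (fun _ => 1 / 3) (single i 2 + single j 2)

theorem even_motzkinVertex_apply (i j : σ) (m : Fin 3) (l : σ) : Even (motzkinVertex i j m l) := by
  have h2 (a : σ) : Even (single a 2 l) := even_single_apply (by decide) a l
  have h4 (a : σ) : Even (single a 4 l) := even_single_apply (by decide) a l
  fin_cases m
  exacts [Even.zero, (h4 i).add (h2 j), (h2 i).add (h4 j)]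

theorem exponentPoint_motzkin_barycenter (i j : σ) :
    exponentPoint (single i 2 + single j 2) =
      ∑ m, (1 / 3 : ℝ) • exponentPoint (motzkinVertex i j m) := by
  classical
  ext l
  simp only [motzkinVertex, Fin.sum_univ_three, Matrix.cons_val, map_zero, Pi.add_apply,
    Pi.smul_apply, Pi.zero_apply, smul_eq_mul, exponentPoint_apply, Finsupp.add_apply,
    Finsupp.single_apply]
  split_ifs <;> norm_num

theorem affineIndependent_motzkinVertex (hij : i ≠ j) :
    AffineIndependent ℝ fun m => exponentPoint (motzkinVertex i j m) := by
  rw [affineIndependent_iff_of_fintype]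
  intro v hv hcomb
  rw [Finset.univ.weightedVSub_eq_linear_combination hv] at hcomb
  have hsum : v 0 + v 1 + v 2 = 0 := by rwa [Fin.sum_univ_three] at hv
  have hi : v 1 * 4 + v 2 * 2 = 0 := by
    simpa [motzkinVertex, Fin.sum_univ_three, hij] using congrFun hcomb i
  have hj : v 1 * 2 + v 2 * 4 = 0 := by
    simpa [motzkinVertex, Fin.sum_univ_three, hij.symm] using congrFun hcomb j
  rw [Fin.forall_fin_succ, Fin.forall_fin_two]
  refine ⟨?_, ?_, ?_⟩ <;> norm_num <;> linarith

theorem halfSpaces_of_mem_exponentHull_motzkinVertex (hij : i ≠ j) {x : σ → ℝ}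
    (hx : x ∈ exponentHull (motzkinVertex i j)) :
    x i ≤ 2 * x j ∧ x j ≤ 2 * x i ∧ x i + x j ≤ 6 := by
  let X (l : σ) : (σ → ℝ) →ₗ[ℝ] ℝ := LinearMap.proj l
  have hi : x i - 2 * x j ≤ 0 := le_of_mem_exponentHull (X i - (2 : ℝ) • X j)
    (fun m => by fin_cases m <;> norm_num [X, motzkinVertex, hij, hij.symm]) hx
  have hj : x j - 2 * x i ≤ 0 := le_of_mem_exponentHull (X j - (2 : ℝ) • X i)
    (fun m => by fin_cases m <;> norm_num [X, motzkinVertex, hij, hij.symm]) hx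
  have hs : x i + x j ≤ 6 := le_of_mem_exponentHull (X i + X j)
    (fun m => by fin_cases m <;> norm_num [X, motzkinVertex, hij, hij.symm]) hx
  exact ⟨sub_nonpos.mp hi, sub_nonpos.mp hj, hs⟩

theorem eq_of_add_eq_motzkin_exponent (hij : i ≠ j) {a b : σ →₀ ℕ}
    (ha : exponentPoint (a + a) ∈ exponentHull (motzkinVertex i j))
    (hb : exponentPoint (b + b) ∈ exponentHull (motzkinVertex i j))
    (hab : a + b = single i 2 + single j 2) : a = b := by
  obtain ⟨hai, haj, has⟩ := halfSpaces_of_mem_exponentHull_motzkinVertex hij ha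
  obtain ⟨hbi, hbj, hbs⟩ := halfSpaces_of_mem_exponentHull_motzkinVertex hij hb
  simp only [exponentPoint_apply, Finsupp.add_apply] at hai haj has hbi hbj hbs
  norm_cast at hai haj has hbi hbj hbs
  have hi : a i + b i = 2 := by simpa [hij] using DFunLike.congr_fun hab i
  have hj : a j + b j = 2 := by simpa [hij.symm] using DFunLike.congr_fun hab j
  ext l
  rcases eq_or_ne l i with rfl | hli
  · omega
  rcases eq_or_ne l j with rfl | hlj
  · omega
  have hl : a l + b l = 0 := by simpa [hli, hlj] using DFunLike.congr_fun hab l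
  omega

theorem motzkin_ne_sum_sq {κ : Type*} (hij : i ≠ j) (t : Finset κ) (s : κ → MvPolynomial σ ℝ) :
    motzkin i j ≠ ∑ k ∈ t, s k ^ 2 := by
  refine agiform_ne_sum_sq (fun _ => by norm_num) (by simp) (exponentPoint_motzkin_barycenter i j)
    (fun m h => ?_) (fun a b => eq_of_add_eq_motzkin_exponent hij) t s
  have hi := DFunLike.congr_fun h i
  have hj := DFunLike.congr_fun h j
  fin_cases m <;> simp [motzkinVertex, hij, hij.symm] at hi hj

theorem motzkin_mem_SONCCone {n d : ℕ} {i j : Fin n} (hij : i ≠ j) (hd : 3 ≤ d) :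
    motzkin i j ∈ SONCCone n d := by
  refine agiform_mem_SONCCone (affineIndependent_motzkinVertex hij) (even_motzkinVertex_apply i j)
    (fun _ => by norm_num) (by simp) (exponentPoint_motzkin_barycenter i j)
    ((totalDegree_agiform_le (D := 6) (fun m => ?_) ?_).trans (by omega))
  · fin_cases m <;> simp [motzkinVertex]
  · simp

end Motzkin

section ChoiLam

variable {σ : Type*} {i j k : σ}

open Finsupp (single)

/-- The vertices `0`, `(2, 2, 0)`, `(2, 0, 2)`, `(0, 2, 2)` of the Newton polytope of the Choi–Lam
polynomial, in the coordinates `i`, `j` and `k`. -/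
noncomputable def choiLamVertex (i j k : σ) : Fin 4 → σ →₀ ℕ :=
  ![0, single i 2 + single j 2, single i 2 + single k 2, single j 2 + single k 2]

/-- One quarter of the Choi–Lam polynomial `1 + x²y² + x²z² + y²z² - 4xyz` in the variables
`x = X i`, `y = X j`, `z = X k`, as an agiform. -/
noncomputable def choiLam (i j k : σ) : MvPolynomial σ ℝ :=
  agiform (choiLamVertex i j k) (fun _ => 1 / 4) (single i 1 + single j 1 + single k 1)

theorem even_choiLamVertex_apply (i j k : σ) (m : Fin 4) (l : σ) :
    Even (choiLamVertex i j k m l) := by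
  have h2 (a : σ) : Even (single a 2 l) := even_single_apply even_two a l
  fin_cases m
  exacts [Even.zero, (h2 i).add (h2 j), (h2 i).add (h2 k), (h2 j).add (h2 k)]

theorem exponentPoint_choiLam_barycenter (i j k : σ) :
    exponentPoint (single i 1 + single j 1 + single k 1) =
      ∑ m, (1 / 4 : ℝ) • exponentPoint (choiLamVertex i j k m) := by
  classical
  ext l
  simp only [choiLamVertex, Fin.sum_univ_four, Matrix.cons_val, map_zero, Pi.add_apply,
    Pi.smul_apply, Pi.zero_apply, smul_eq_mul, exponentPoint_apply, Finsupp.add_apply,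
    Finsupp.single_apply]
  split_ifs <;> norm_num

theorem affineIndependent_choiLamVertex (hij : i ≠ j) (hik : i ≠ k) (hjk : j ≠ k) :
    AffineIndependent ℝ fun m => exponentPoint (choiLamVertex i j k m) := by
  rw [affineIndependent_iff_of_fintype]
  intro v hv hcomb
  rw [Finset.univ.weightedVSub_eq_linear_combination hv] at hcomb
  have hsum : v 0 + v 1 + v 2 + v 3 = 0 := by rwa [Fin.sum_univ_four] at hv
  have hi : v 1 * 2 + v 2 * 2 = 0 := by
    simpa [choiLamVertex, Fin.sum_univ_four, hij, hik] using congrFun hcomb i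
  have hj : v 1 * 2 + v 3 * 2 = 0 := by
    simpa [choiLamVertex, Fin.sum_univ_four, hij.symm, hjk] using congrFun hcomb j
  have hk : v 2 * 2 + v 3 * 2 = 0 := by
    simpa [choiLamVertex, Fin.sum_univ_four, hik.symm, hjk.symm] using congrFun hcomb k
  intro m
  fin_cases m <;> simp only [Fin.zero_eta, Fin.mk_one, Fin.reduceFinMk] <;> linarith

theorem halfSpaces_of_mem_exponentHull_choiLamVertex (hij : i ≠ j) (hik : i ≠ k) (hjk : j ≠ k)
    {x : σ → ℝ} (hx : x ∈ exponentHull (choiLamVertex i j k)) :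
    x i ≤ x j + x k ∧ x j ≤ x i + x k ∧ x k ≤ x i + x j ∧ x i + x j + x k ≤ 4 := by
  let X (l : σ) : (σ → ℝ) →ₗ[ℝ] ℝ := LinearMap.proj l
  have hi : x i - (x j + x k) ≤ 0 := le_of_mem_exponentHull (X i - (X j + X k))
    (fun m => by fin_cases m <;>
      norm_num [X, choiLamVertex, hij, hij.symm, hik, hik.symm, hjk, hjk.symm]) hx
  have hj : x j - (x i + x k) ≤ 0 := le_of_mem_exponentHull (X j - (X i + X k))
    (fun m => by fin_cases m <;>
      norm_num [X, choiLamVertex, hij, hij.symm, hik, hik.symm, hjk, hjk.symm]) hx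
  have hk : x k - (x i + x j) ≤ 0 := le_of_mem_exponentHull (X k - (X i + X j))
    (fun m => by fin_cases m <;>
      norm_num [X, choiLamVertex, hij, hij.symm, hik, hik.symm, hjk, hjk.symm]) hx
  have hs : x i + x j + x k ≤ 4 := le_of_mem_exponentHull (X i + X j + X k)
    (fun m => by fin_cases m <;>
      norm_num [X, choiLamVertex, hij, hij.symm, hik, hik.symm, hjk, hjk.symm]) hx
  exact ⟨sub_nonpos.mp hi, sub_nonpos.mp hj, sub_nonpos.mp hk, hs⟩

theorem add_ne_choiLam_exponent (hij : i ≠ j) (hik : i ≠ k) (hjk : j ≠ k) {a b : σ →₀ ℕ}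
    (ha : exponentPoint (a + a) ∈ exponentHull (choiLamVertex i j k))
    (hb : exponentPoint (b + b) ∈ exponentHull (choiLamVertex i j k)) :
    a + b ≠ single i 1 + single j 1 + single k 1 := by
  intro hab
  obtain ⟨hai, haj, hak, has⟩ := halfSpaces_of_mem_exponentHull_choiLamVertex hij hik hjk ha
  obtain ⟨hbi, hbj, hbk, hbs⟩ := halfSpaces_of_mem_exponentHull_choiLamVertex hij hik hjk hb
  simp only [exponentPoint_apply, Finsupp.add_apply] at hai haj hak has hbi hbj hbk hbs
  norm_cast at hai haj hak has hbi hbj hbk hbs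
  have hi : a i + b i = 1 := by simpa [hij, hik] using DFunLike.congr_fun hab i
  have hj : a j + b j = 1 := by simpa [hij.symm, hjk] using DFunLike.congr_fun hab j
  have hk : a k + b k = 1 := by simpa [hik.symm, hjk.symm] using DFunLike.congr_fun hab k
  omega

theorem choiLam_ne_sum_sq {κ : Type*} (hij : i ≠ j) (hik : i ≠ k) (hjk : j ≠ k) (t : Finset κ)
    (s : κ → MvPolynomial σ ℝ) : choiLam i j k ≠ ∑ m ∈ t, s m ^ 2 := by
  refine agiform_ne_sum_sq (fun _ => by norm_num) (by simp)
    (exponentPoint_choiLam_barycenter i j k) (fun m h => ?_)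
    (fun a b ha hb hab => absurd hab (add_ne_choiLam_exponent hij hik hjk ha hb)) t s
  have hi := even_choiLamVertex_apply i j k m i
  simp [h, hij, hik] at hi

theorem choiLam_mem_SONCCone {n d : ℕ} {i j k : Fin n} (hij : i ≠ j) (hik : i ≠ k) (hjk : j ≠ k)
    (hd : 2 ≤ d) : choiLam i j k ∈ SONCCone n d := by
  refine agiform_mem_SONCCone (affineIndependent_choiLamVertex hij hik hjk)
    (even_choiLamVertex_apply i j k) (fun _ => by norm_num) (by simp)
    (exponentPoint_choiLam_barycenter i j k)
    ((totalDegree_agiform_le (D := 4) (fun m => ?_) ?_).trans (by omega))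
  · fin_cases m <;> simp [choiLamVertex]
  · simp

end ChoiLam

/-- If `n ≥ 2`, `2d ≥ 4` and `(n,2d) ≠ (2,4)`, then
`C_{n,2d} ⊄ Σ_{n,2d}`: there is an `n`-variate polynomial of degree at most
`2d` that is a sum of nonnegative circuit polynomials but not a sum of squares
of polynomials. -/
theorem SONCCone_not_subset_SOSCone (n d : ℕ)
    (hn : 2 ≤ n) (hd : 4 ≤ 2 * d) (hne : (n, 2 * d) ≠ (2, 4)) :
    ∃ p : MvPolynomial (Fin n) ℝ, p ∈ SONCCone n d ∧ p ∉ SOSCone n d := by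
  rcases hn.eq_or_lt with rfl | hn3
  · have hd3 : 3 ≤ d := by
      by_contra hlt
      exact hne (by rw [show d = 2 by omega])
    have hij : (0 : Fin 2) ≠ 1 := by decide
    exact ⟨motzkin 0 1, motzkin_mem_SONCCone hij hd3,
      fun ⟨_, _, s, hs⟩ => motzkin_ne_sum_sq hij Finset.univ s hs⟩
  · obtain ⟨f⟩ : Nonempty (Fin 3 ↪ Fin n) := ⟨Fin.castLEEmb hn3⟩
    have hij : f 0 ≠ f 1 := f.injective.ne (by decide)
    have hik : f 0 ≠ f 2 := f.injective.ne (by decide)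
    have hjk : f 1 ≠ f 2 := f.injective.ne (by decide)
    exact ⟨choiLam (f 0) (f 1) (f 2), choiLam_mem_SONCCone hij hik hjk (by omega),
      fun ⟨_, _, s, hs⟩ => choiLam_ne_sum_sq hij hik hjk Finset.univ s hs⟩
end
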